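/- Let r ≥ 2 be an integer and let ε > 0. There exists a constant C = C(r, ε) such that the following holds. Let p be a prime, let K, M, N be real numbers with 1 < K, M, N < p and N > 4·p^{1/r}, let a, b be integers with p ∤ ab, let χ be a non-trivial multiplicative character modulo p, let α = (α_m) be complex numbers with |α_m| ≤ 1 for all m, and let β = (β_{k,n}) be arbitrary complex numbers. Then |∑_{1 ≤ k ≤ K} ∑_{1 ≤ m ≤ M} ∑_{1 ≤ n ≤ N} α_m · β_{k,n} · χ(a·k + b·m·n)| ≤ C · p^ε · ‖β‖₂ · M·(N·K)^{1/2} · Δ₂, where ‖β‖₂ = (∑_{1 ≤ k ≤ K} ∑_{1 ≤ n ≤ N} |β_{k,n}|²)^{1/2} and Δ₂ = (1 + K/M²)^{1/(4r)} · (1 + (|a|·K + |b|·M·N)·M·N·p^{-1-1/r})^{1/(2r)} · (p^{1+1/r}/(K·M²·N²))^{1/(4r)} + M^{-1/2}. -/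

import Mathlib

open Finset

/-!
Cauchy–Schwarz removes `β` and leaves the second moment over `(k, n)` of `∑ₘ αₘ χ(ak + bmn)`.
Shifting `n` by `uv` with `u ≤ U ≈ N / p ^ (1 / r)` and `v ≤ V ≈ p ^ (1 / r)` and dividing by `bmu`
turns the values of `χ` into `χ(t + v)`, where `t` is the reduction modulo `p` of
`(ak + bmn) / (bmu)`. The diagonal `m₁ = m₂` of the squared sum gives the term `M ^ (-1 / 2)`;
elsewhere Hölder's inequality separates two quantities. The first counts the coincidences among the
pairs of residues `(t₁, t₂)`: few rationals of bounded height share a residue, and the divisor bound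
controls how often each pair of rationals occurs. The second is the complete `2r`-th moment of the
correlations of `χ` over short intervals, which is bounded by Weil's theorem for
`∑ₓ χ(∏ (x - c) ^ e)`. For that theorem, Stepanov's method gives `O(q ^ (n / 2))` over every
extension of degree `n`, and the polynomial `L`-function then forces the sharp constant: by Newton's
identities, the power sums of its inverse roots are, up to sign, the sums over the extensions.
-/

section Stepanov

open Polynomial

theorem pow_sub_dvd_hasseDeriv_pow {R : Type*} [CommSemiring R] (f : R[X]) (n k : ℕ) :
    f ^ (n - k) ∣ hasseDeriv k (f ^ n) := by
  induction n generalizing k with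
  | zero => simp
  | succ n ih =>
    rw [pow_succ, hasseDeriv_mul]
    refine dvd_sum fun ij hij => ?_
    have hk : ij.1 + ij.2 = k := mem_antidiagonal.mp hij
    rcases Nat.eq_zero_or_pos ij.2 with h | h
    · rw [h, hasseDeriv_zero', ← show ij.1 = k by omega]
      exact (pow_dvd_pow f (by omega)).trans (pow_succ f _ ▸ mul_dvd_mul_right (ih ij.1) f)
    · exact ((pow_dvd_pow f (by omega)).trans (ih ij.1)).mul_right _

theorem pow_sub_dvd_hasseDeriv_pow_mul {R : Type*} [CommSemiring R] (f g : R[X]) (n k : ℕ) :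
    f ^ (n - k) ∣ hasseDeriv k (f ^ n * g) := by
  rw [hasseDeriv_mul]
  refine dvd_sum fun ij hij => Dvd.dvd.mul_right ?_ _
  have hk : ij.1 + ij.2 = k := mem_antidiagonal.mp hij
  exact (pow_dvd_pow f (by omega)).trans (pow_sub_dvd_hasseDeriv_pow f n ij.1)

theorem X_sub_C_pow_dvd_iff_hasseDeriv {R : Type*} [CommRing R] {f : R[X]} {x : R} {n : ℕ} :
    (X - C x) ^ n ∣ f ↔ ∀ k < n, (hasseDeriv k f).eval x = 0 := by
  simp only [X_sub_C_pow_dvd_iff, ← taylor_apply, X_pow_dvd_iff, taylor_coeff]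

section Field

variable {F : Type*} [Field F]

theorem exists_linearMap_hasseDeriv_pow_mul {f : F[X]} (hf : f ≠ 0) {n k : ℕ} (hk : k ≤ n) :
    ∃ s : F[X] →ₗ[F] F[X], (∀ g, (s g).natDegree ≤ k * f.natDegree + g.natDegree) ∧
      ∀ g, hasseDeriv k (f ^ n * g) = f ^ (n - k) * s g := by
  choose s hs using fun g => pow_sub_dvd_hasseDeriv_pow_mul f g n k
  have hpow : f ^ (n - k) ≠ 0 := pow_ne_zero _ hf
  refine ⟨⟨⟨s, fun g h => mul_left_cancel₀ hpow ?_⟩, fun c g => mul_left_cancel₀ hpow ?_⟩,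
    fun g => ?_, hs⟩
  · rw [mul_add, ← hs, ← hs, ← hs, mul_add, map_add]
  · rw [RingHom.id_apply, mul_smul_comm, ← hs, ← hs, mul_smul_comm, map_smul]
  · change (s g).natDegree ≤ _
    rcases eq_or_ne (s g) 0 with h | h
    · simp [h]
    have hdeg := natDegree_hasseDeriv_le (f ^ n * g) k
    have hmul := natDegree_mul_le (p := f ^ n) (q := g)
    rw [hs, natDegree_mul hpow h, natDegree_pow] at hdeg
    rw [natDegree_pow] at hmul
    obtain ⟨c, rfl⟩ := Nat.exists_eq_add_of_le hk
    rw [Nat.add_sub_cancel_left] at hdeg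
    rw [add_mul] at hmul
    omega

theorem exists_ne_zero_forall_apply_eq_zero {V : Type*} [AddCommGroup V] [Module F V]
    [FiniteDimensional F V] {l m : ℕ} (G : Fin l → V →ₗ[F] F[X])
    (hdeg : ∀ k v, (G k v).degree < m) (hlt : l * m < Module.finrank F V) :
    ∃ v ≠ 0, ∀ k, G k v = 0 := by
  let Φ : V →ₗ[F] (Fin l → degreeLT F m) :=
    LinearMap.pi fun k => (G k).codRestrict _ fun v => mem_degreeLT.mpr (hdeg k v)
  have hker : LinearMap.ker Φ ≠ ⊥ := by
    apply LinearMap.ker_ne_bot_of_finrank_lt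
    simpa [Module.finrank_pi_fintype, (degreeLTEquiv F m).finrank_eq] using hlt
  obtain ⟨v, hv, hv0⟩ := (Submodule.ne_bot_iff _).mp hker
  exact ⟨v, hv0, fun k => congrArg Subtype.val (congrFun (LinearMap.mem_ker.mp hv) k)⟩

theorem card_mul_le_natDegree_of_X_sub_C_pow_dvd {g : F[X]} (hg : g ≠ 0) {S : Finset F} {l : ℕ}
    (h : ∀ x ∈ S, (X - C x) ^ l ∣ g) : #S * l ≤ g.natDegree := by
  have hprod : ∏ x ∈ S, (X - C x) ^ l ∣ g := prod_dvd_of_coprime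
    (fun x _ y _ hxy => (isCoprime_X_sub_C_of_isUnit_sub (sub_ne_zero.mpr hxy).isUnit).pow) h
  have hdeg := natDegree_le_of_dvd hprod hg
  rw [natDegree_prod_of_monic _ _ fun x _ => (monic_X_sub_C x).pow l] at hdeg
  simpa using hdeg

/-- Stepanov's auxiliary polynomial attached to `f` and to low-degree coefficients `r i j`. Over a
field with `q` elements, on the set where `f ^ Q` takes the value `z`, it agrees with the polynomial
`∑ r i j * z ^ j * X ^ i` of much smaller degree. -/
noncomputable def stepanovPoly (f : F[X]) (Q q : ℕ) {A d : ℕ} (r : Fin A × Fin d → F[X]) : F[X] :=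
  ∑ ij, r ij * f ^ ((ij.2 : ℕ) * Q) * X ^ ((ij.1 : ℕ) * q)

theorem mul_add_self_le_mul_of_lt {a b : ℕ} (h : a < b) (c : ℕ) : a * c + c ≤ b * c := by
  rw [← add_one_mul]
  exact Nat.mul_le_mul_right c h

theorem mixedRadix_gap {A d Q q : ℕ} (hq : d * Q ≤ q) {x y : Fin A × Fin d} (hxy : x ≠ y)
    (hle : (x.1 : ℕ) * q + x.2 * Q ≤ y.1 * q + y.2 * Q) :
    (x.1 : ℕ) * q + x.2 * Q + Q ≤ y.1 * q + y.2 * Q := by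
  have hx := mul_add_self_le_mul_of_lt x.2.2 Q
  have hy := mul_add_self_le_mul_of_lt y.2.2 Q
  rcases lt_trichotomy (x.1 : ℕ) y.1 with h | h | h
  · have := mul_add_self_le_mul_of_lt h q
    omega
  · rw [h] at hle ⊢
    rcases Nat.lt_or_gt_of_ne fun h2 : (x.2 : ℕ) = y.2 => hxy (Prod.ext (Fin.ext h) (Fin.ext h2))
      with h2 | h2
    · have := mul_add_self_le_mul_of_lt h2 Q
      omega
    · have := mul_add_self_le_mul_of_lt h2 Q
      omega
  · have := mul_add_self_le_mul_of_lt h q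
    omega

/- The term of index `(i, j)` is divisible by exactly `X ^ (i * q + j * Q)` up to the order of
vanishing of `r i j`, which is less than `Q`, so the lowest term cannot be cancelled. -/
theorem stepanovPoly_ne_zero {f : F[X]} (hf0 : f.coeff 0 = 0) (hf1 : f.coeff 1 ≠ 0) {A d Q q : ℕ}
    (hq : d * Q ≤ q) {r : Fin A × Fin d → F[X]} (hr : ∀ ij, (r ij).degree < Q) (hr0 : r ≠ 0) :
    stepanovPoly f Q q r ≠ 0 := by
  classical
  intro hsum
  obtain ⟨g, rfl⟩ : X ∣ f := X_dvd_iff.mpr hf0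
  have hg : ¬ X ∣ g := by rwa [X_dvd_iff, ← coeff_X_mul g 0]
  let w : Fin A × Fin d → ℕ := fun ij => (ij.1 : ℕ) * q + (ij.2 : ℕ) * Q
  have hterm (ij : Fin A × Fin d) : r ij * (X * g) ^ ((ij.2 : ℕ) * Q) * X ^ ((ij.1 : ℕ) * q) =
      X ^ w ij * (r ij * g ^ ((ij.2 : ℕ) * Q)) := by
    simp only [w, mul_pow, pow_add]
    ring
  obtain ⟨i, hi⟩ := Function.ne_iff.mp hr0
  obtain ⟨m, hm, hmin⟩ := exists_min_image (univ.filter fun ij => r ij ≠ 0) w ⟨i, by simpa using hi⟩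
  simp only [mem_filter, mem_univ, true_and] at hm hmin
  have hdvd : X ^ (w m + Q) ∣ X ^ w m * (r m * g ^ ((m.2 : ℕ) * Q)) := by
    rw [stepanovPoly, ← add_sum_erase _ _ (mem_univ m), hterm] at hsum
    rw [eq_neg_of_add_eq_zero_left hsum, dvd_neg]
    refine dvd_sum fun ij hij => ?_
    rw [hterm]
    rcases eq_or_ne (r ij) 0 with h | h
    · simp [h]
    · exact (pow_dvd_pow X (mixedRadix_gap hq (ne_of_mem_erase hij).symm (hmin ij h))).mul_right _
  rw [pow_add, mul_dvd_mul_iff_left (pow_ne_zero _ X_ne_zero)] at hdvd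
  have hcop : IsCoprime (X ^ Q : F[X]) (g ^ ((m.2 : ℕ) * Q)) :=
    (irreducible_X.coprime_iff_not_dvd.mpr hg).pow
  exact hm <| eq_zero_of_dvd_of_degree_lt (hcop.dvd_of_dvd_mul_right hdvd)
    (by simpa [degree_X_pow] using hr m)

theorem natDegree_stepanovPoly_le (f : F[X]) {A d Q q : ℕ} (hq : d * Q ≤ q)
    {r : Fin A × Fin d → F[X]} (hr : ∀ ij, (r ij).degree < Q) :
    (stepanovPoly f Q q r).natDegree ≤ A * q + q * f.natDegree := by
  refine natDegree_sum_le_of_forall_le _ _ fun ij _ => natDegree_mul_le.trans ?_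
  have hrij : (r ij).natDegree ≤ Q := natDegree_le_of_degree_le (hr ij).le
  have hpow : (f ^ ((ij.2 : ℕ) * Q)).natDegree ≤ (ij.2 : ℕ) * Q * f.natDegree := natDegree_pow_le
  have hmul := natDegree_mul_le (p := r ij) (q := f ^ ((ij.2 : ℕ) * Q))
  have hj := mul_add_self_le_mul_of_lt ij.2.2 Q
  have hi := mul_add_self_le_mul_of_lt ij.1.2 q
  have hjD : (ij.2 : ℕ) * Q * f.natDegree ≤ q * f.natDegree := Nat.mul_le_mul_right _ (by omega)
  rw [natDegree_X_pow]
  omega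

/- On the points where `f ^ Q = z`, the `k`-th Hasse derivative of the auxiliary polynomial, with
`X ^ q` frozen, is `f ^ (l - k)` times a polynomial of degree less than `Q + A + l * deg f`. -/
theorem exists_hasseDeriv_eval_eq_zero {f : F[X]} (hf : f ≠ 0) {A d Q l : ℕ}
    (hlin : l * (Q + A + l * f.natDegree) < A * d * Q) (z : F) :
    ∃ r : Fin A × Fin d → F[X], r ≠ 0 ∧ (∀ ij, (r ij).degree < Q) ∧
      ∀ x, f.eval x ^ Q = z → ∀ k < l,
        (hasseDeriv k (∑ ij, f ^ (l + (ij.2 : ℕ) * Q) * r ij * C (x ^ (ij.1 : ℕ)))).eval x = 0 := by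
  choose s hs_deg hs using fun (k : Fin l) (j : Fin d) =>
    exists_linearMap_hasseDeriv_pow_mul hf (n := l + j * Q) (k := k) (by have := k.2; omega)
  let G : Fin l → (Fin A × Fin d → degreeLT F Q) →ₗ[F] F[X] := fun k => ∑ ij,
    LinearMap.mulLeft F (C (z ^ (ij.2 : ℕ)) * X ^ (ij.1 : ℕ)) ∘ₗ s k ij.2 ∘ₗ
      (degreeLT F Q).subtype ∘ₗ LinearMap.proj ij
  have hG (k : Fin l) (v : Fin A × Fin d → degreeLT F Q) :
      G k v = ∑ ij, C (z ^ (ij.2 : ℕ)) * X ^ (ij.1 : ℕ) * s k ij.2 (v ij) := by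
    simp [G, LinearMap.sum_apply, mul_assoc]
  have hG_deg (k v) : (G k v).degree < (Q + A + l * f.natDegree : ℕ) := by
    rw [hG, ← mem_degreeLT]
    refine Submodule.sum_mem _ fun ij _ => mem_degreeLT.mpr ?_
    have hQ : (v ij : F[X]).natDegree ≤ Q :=
      natDegree_le_of_degree_le (mem_degreeLT.mp (v ij).2).le
    have hX : (C (z ^ (ij.2 : ℕ)) * X ^ (ij.1 : ℕ) : F[X]).natDegree ≤ ij.1 :=
      natDegree_C_mul_X_pow_le _ _
    have hk : (k : ℕ) * f.natDegree ≤ l * f.natDegree := Nat.mul_le_mul_right _ k.2.le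
    have hmul := natDegree_mul_le (p := C (z ^ (ij.2 : ℕ)) * X ^ (ij.1 : ℕ)) (q := s k ij.2 (v ij))
    have hsk := hs_deg k ij.2 (v ij)
    have := ij.1.2
    exact degree_le_natDegree.trans_lt (by exact_mod_cast (by omega))
  obtain ⟨v, hv0, hv⟩ := exists_ne_zero_forall_apply_eq_zero G hG_deg <| by
    simpa [Module.finrank_pi_fintype, (degreeLTEquiv F Q).finrank_eq] using hlin
  refine ⟨fun ij => v ij, fun h => hv0 (funext fun ij => Subtype.ext (congrFun h ij)),
    fun ij => mem_degreeLT.mp (v ij).2, fun x hx k hk => ?_⟩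
  have hfactor : (hasseDeriv k (∑ ij, f ^ (l + (ij.2 : ℕ) * Q) * (v ij : F[X]) *
      C (x ^ (ij.1 : ℕ)))).eval x = f.eval x ^ (l - k) * (G ⟨k, hk⟩ v).eval x := by
    rw [hG]
    simp only [map_sum, eval_finsetSum, mul_sum]
    refine sum_congr rfl fun ij _ => ?_
    have hexp : l + (ij.2 : ℕ) * Q - k = (l - k) + Q * ij.2 := by rw [mul_comm]; omega
    rw [mul_comm, ← smul_eq_C_mul, LinearMap.map_smul, eval_smul, hs ⟨k, hk⟩ ij.2]
    simp only [hexp, pow_add, pow_mul, eval_mul, eval_pow, eval_C, eval_X, smul_eq_mul, hx]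
    ring
  rw [hfactor, hv, eval_zero, mul_zero]

end Field

section FiniteField

variable {F : Type*} [Field F] [Fintype F]

theorem X_sub_C_pow_card_dvd (x : F) (i : ℕ) :
    (X - C x) ^ Fintype.card F ∣ (X ^ (i * Fintype.card F) - C (x ^ i) : F[X]) := by
  obtain ⟨p, hp⟩ := CharP.exists F
  obtain ⟨n, hpp, hn⟩ := FiniteField.card F p
  have : Fact p.Prime := ⟨hpp⟩
  have hfrob : (X - C x : F[X]) ^ Fintype.card F = X ^ Fintype.card F - C x := by
    conv_lhs => rw [hn]
    rw [sub_pow_char_pow, ← hn, ← C_pow, FiniteField.pow_card]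
  rw [hfrob, mul_comm, pow_mul, C_pow]
  exact sub_dvd_pow_sub_pow _ _ _

theorem card_filter_eval_pow_eq_mul_le [DecidableEq F] {f : F[X]} (hf0 : f.coeff 0 = 0)
    (hf1 : f.coeff 1 ≠ 0) {A d Q l : ℕ} (hq : d * Q ≤ Fintype.card F) (hl : l ≤ Fintype.card F)
    (hlin : l * (Q + A + l * f.natDegree) < A * d * Q) (z : F) :
    #{x : F | f.eval x ^ Q = z} * l ≤
      A * Fintype.card F + l * f.natDegree + Fintype.card F * f.natDegree := by
  have hf : f ≠ 0 := by
    rintro rfl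
    exact hf1 (coeff_zero 1)
  obtain ⟨r, hr0, hr, hvan⟩ := exists_hasseDeriv_eval_eq_zero hf hlin z
  have hne : f ^ l * stepanovPoly f Q (Fintype.card F) r ≠ 0 :=
    mul_ne_zero (pow_ne_zero _ hf) (stepanovPoly_ne_zero hf0 hf1 hq hr hr0)
  refine (card_mul_le_natDegree_of_X_sub_C_pow_dvd hne fun x hx => ?_).trans ?_
  · rw [← dvd_sub_left (X_sub_C_pow_dvd_iff_hasseDeriv.mpr (hvan x (mem_filter.mp hx).2)),
      stepanovPoly, mul_sum, ← sum_sub_distrib]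
    refine dvd_sum fun ij _ => ?_
    have hterm : f ^ l * (r ij * f ^ ((ij.2 : ℕ) * Q) * X ^ ((ij.1 : ℕ) * Fintype.card F)) -
        f ^ (l + (ij.2 : ℕ) * Q) * r ij * C (x ^ (ij.1 : ℕ)) =
        f ^ (l + (ij.2 : ℕ) * Q) * r ij * (X ^ ((ij.1 : ℕ) * Fintype.card F) -
          C (x ^ (ij.1 : ℕ))) := by ring
    rw [hterm]
    exact ((pow_dvd_pow _ hl).trans (X_sub_C_pow_card_dvd x ij.1)).mul_left _
  · have hmul := natDegree_mul_le (p := f ^ l) (q := stepanovPoly f Q (Fintype.card F) r)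
    have hpow : (f ^ l).natDegree ≤ l * f.natDegree := natDegree_pow_le
    have hdeg := natDegree_stepanovPoly_le f hq hr
    omega

end FiniteField

end Stepanov

section StepanovBound

open Polynomial

theorem stepanov_linear_lt {d D Q q A l : ℕ} (hq : q = d * Q + 1) (hq1 : 1 < q)
    (hA : A * A ≤ q) (hl : l + (2 * d ^ 2 * (1 + d * D) + 1) = d * A) :
    l * (Q + A + l * D) < A * d * Q := by
  have hquad : l * (A + l * D) ≤ d * (1 + d * D) * q :=
    calc l * (A + l * D) ≤ d * A * (A + d * A * D) := by gcongr <;> omega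
      _ = d * (1 + d * D) * (A * A) := by ring
      _ ≤ _ := by gcongr
  have hlin : d * (1 + d * D) * q < (2 * d ^ 2 * (1 + d * D) + 1) * Q := by
    refine Nat.lt_of_mul_lt_mul_left (a := d) ?_
    calc d * (d * (1 + d * D) * q) = d ^ 2 * (1 + d * D) * q := by ring
      _ ≤ d ^ 2 * (1 + d * D) * (2 * (d * Q)) := by gcongr; omega
      _ = 2 * d ^ 2 * (1 + d * D) * (d * Q) := by ring
      _ < (2 * d ^ 2 * (1 + d * D) + 1) * (d * Q) := by rw [add_one_mul]; omega
      _ = d * ((2 * d ^ 2 * (1 + d * D) + 1) * Q) := by ring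
  calc l * (Q + A + l * D) = l * Q + l * (A + l * D) := by ring
    _ < l * Q + (2 * d ^ 2 * (1 + d * D) + 1) * Q := by omega
    _ = A * d * Q := by rw [← add_mul, hl]; ring

theorem le_div_add_of_mul_le_stepanov {n q d D δ s A l : ℝ} (hd : 1 ≤ d) (hD : 0 ≤ D) (hδ : 0 ≤ δ)
    (hl0 : 0 < l) (hs : 0 ≤ s) (hsq : s * s = q) (hsA : s ≤ 2 * A) (hl : d * A = δ + l)
    (hδA : δ ≤ l) (h : n * l ≤ A * q + l * D + q * D) :
    n ≤ q / d + 4 * (d * D + δ) * s + D := by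
  have hs4 : s ≤ 4 * l := by nlinarith
  have hs4d : s ≤ 4 * l * d := hs4.trans (le_mul_of_one_le_right (by positivity) hd)
  have hq : q ≤ 4 * s * (d * l) := by nlinarith
  have hmain : d * (n * l) ≤ (δ + l) * q + d * (l * D + q * D) := by
    rw [← hl]
    nlinarith
  refine le_of_mul_le_mul_right ?_ (show 0 < d * l by positivity)
  calc n * (d * l) = d * (n * l) := by ring
    _ ≤ q * l + (d * D + δ) * q + D * (d * l) := by linarith
    _ ≤ q * l + (d * D + δ) * (4 * s * (d * l)) + D * (d * l) := by gcongr
    _ = (q / d + 4 * (d * D + δ) * s + D) * (d * l) := by field_simp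

universe u

theorem exists_card_filter_eval_pow_eq_le {d : ℕ} (hd : d ≠ 0) (D : ℕ) :
    ∃ B : ℝ, 0 ≤ B ∧ ∀ (F : Type u) [Field F] [Fintype F] [DecidableEq F] (f : F[X]),
      f.coeff 0 = 0 → f.coeff 1 ≠ 0 → f.natDegree = D →
      ∀ (Q : ℕ), Fintype.card F = d * Q + 1 → ∀ z : F,
      (#{x : F | f.eval x ^ Q = z} : ℝ) ≤
        (Fintype.card F : ℝ) / d + B * √(Fintype.card F : ℝ) := by
  set δ := 2 * d ^ 2 * (1 + d * D) + 1 with hδ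
  refine ⟨4 * (d * D + δ) + D + (2 * δ + 1), by positivity, ?_⟩
  intro F _ _ _ f hf0 hf1 rfl Q hq z
  set q := Fintype.card F
  obtain ⟨A, hAq, hqA⟩ : ∃ A, A * A ≤ q ∧ q < (A + 1) * (A + 1) :=
    ⟨Nat.sqrt q, Nat.sqrt_le q, Nat.lt_succ_sqrt q⟩
  have hq1 : 1 < q := Fintype.one_lt_card
  have hsq : √(q : ℝ) * √(q : ℝ) = q := Real.mul_self_sqrt (by positivity)
  have hs1 : 1 ≤ √(q : ℝ) := Real.one_le_sqrt.mpr (by exact_mod_cast hq1.le)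
  have hsA : √(q : ℝ) ≤ A + 1 := by
    rw [Real.sqrt_le_left (by positivity), sq]
    exact_mod_cast hqA.le
  rcases lt_or_ge A (2 * δ) with hsmall | hlarge
  · have htriv : (#{x : F | f.eval x ^ Q = z} : ℝ) ≤ q := by exact_mod_cast card_le_univ _
    have hA : (A : ℝ) ≤ 2 * δ := by exact_mod_cast hsmall.le
    have hq_le : (q : ℝ) ≤ (2 * δ + 1) * √(q : ℝ) := by
      conv_lhs => rw [← hsq]
      gcongr
      linarith
    have hrest : 0 ≤ (q : ℝ) / d + (4 * (d * f.natDegree + δ) + f.natDegree) * √(q : ℝ) := by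
      positivity
    linarith
  · have hdA : A ≤ d * A := Nat.le_mul_of_pos_left _ (Nat.pos_of_ne_zero hd)
    obtain ⟨l, hl⟩ := Nat.exists_eq_add_of_le (hlarge.trans hdA |> (by omega : δ ≤ 2 * δ).trans)
    have hdδ : d ≤ δ := by nlinarith [Nat.zero_le (2 * d ^ 2 * (d * f.natDegree))]
    have hlq : l ≤ q := by
      have hdle : d * A ≤ A * A := Nat.mul_le_mul_right _ (hdδ.trans (by omega))
      omega
    have hcount := card_filter_eval_pow_eq_mul_le hf0 hf1 (by omega) hlq
      (stepanov_linear_lt hq hq1 hAq (by omega)) z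
    have hbound := le_div_add_of_mul_le_stepanov (n := #{x : F | f.eval x ^ Q = z}) (δ := δ)
      (q := q) (d := d) (D := f.natDegree) (s := √q) (A := A) (l := l)
      (by exact_mod_cast Nat.one_le_iff_ne_zero.mpr hd) (by positivity) (by positivity)
      (by exact_mod_cast (by omega : 0 < l)) (by positivity) hsq
      (hsA.trans (by have : (1 : ℝ) ≤ A := by exact_mod_cast (by omega : 1 ≤ A)
                     linarith))
      (by exact_mod_cast hl) (by exact_mod_cast (by omega : δ ≤ l)) (by exact_mod_cast hcount)
    have hD : (f.natDegree : ℝ) ≤ f.natDegree * √(q : ℝ) :=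
      le_mul_of_one_le_right (by positivity) hs1
    have hrest : 0 ≤ (2 * (δ : ℝ) + 1) * √(q : ℝ) := by positivity
    linarith

end StepanovBound

section NormSums

open Polynomial

universe u

variable {k : Type*} [Field k]

theorem norm_mulChar_le_one [Finite k] (χ : MulChar k ℂ) (x : k) : ‖χ x‖ ≤ 1 := by
  have := Fintype.ofFinite k
  rcases eq_or_ne x 0 with rfl | hx
  · rw [χ.map_zero, norm_zero]
    exact zero_le_one
  · refine (Complex.norm_eq_one_of_pow_eq_one (n := Fintype.card k - 1) ?_ ?_).le
    · rw [← map_pow, FiniteField.pow_card_sub_one_eq_one x hx, map_one]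
    · exact (Nat.sub_pos_of_lt Fintype.one_lt_card).ne'

theorem norm_sum_mulChar_mul_le [Fintype k] [DecidableEq k] {χ : MulChar k ℂ} (hχ : χ ≠ 1)
    {n : k → ℝ} {B : ℝ} (hn : ∀ z, n z ≤ B) :
    ‖∑ z, χ z * n z‖ ≤ ∑ z ∈ univ.erase 0, (B - n z) := by
  have hshift : ∑ z, χ z * (n z : ℂ) = ∑ z ∈ univ.erase 0, χ z * ((n z - B : ℝ) : ℂ) := by
    rw [sum_erase _ (by rw [χ.map_zero, zero_mul])]
    simp only [Complex.ofReal_sub, mul_sub, sum_sub_distrib, ← sum_mul,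
      MulChar.sum_eq_zero_of_ne_one hχ, zero_mul, sub_zero]
  rw [hshift]
  refine norm_sum_le_of_le _ fun z _ => ?_
  rw [norm_mul, Complex.norm_real, Real.norm_eq_abs, abs_sub_comm,
    abs_of_nonneg (sub_nonneg.mpr (hn z))]
  exact mul_le_of_le_one_left (sub_nonneg.mpr (hn z)) (norm_mulChar_le_one χ z)

theorem card_filter_norm_aeval_eq_zero_le [DecidableEq k] {f : k[X]} (hf : f ≠ 0) (L : Type*)
    [Field L] [Fintype L] [Algebra k L] :
    #{x : L | Algebra.norm k (aeval x f) = 0} ≤ f.natDegree := by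
  have hinj := (algebraMap k L).injective
  rw [← natDegree_map (algebraMap k L)]
  refine card_le_degree_of_subset_roots fun x hx => ?_
  rw [mem_roots ((Polynomial.map_ne_zero_iff hinj).mpr hf), IsRoot, eval_map_algebraMap]
  simpa [Algebra.norm_eq_zero_iff] using hx

theorem exists_card_filter_norm_aeval_eq_le [Fintype k] [DecidableEq k] {f : k[X]}
    (hf0 : f.coeff 0 = 0) (hf1 : f.coeff 1 ≠ 0) :
    ∃ B : ℝ, 0 ≤ B ∧ ∀ (L : Type u) [Field L] [Fintype L] [Algebra k L] (z : k),
      (#{x : L | Algebra.norm k (aeval x f) = z} : ℝ) ≤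
        (Fintype.card L : ℝ) / (Fintype.card k - 1 : ℕ) + B * √(Fintype.card L : ℝ) := by
  classical
  have hk : Fintype.card k - 1 ≠ 0 := (Nat.sub_pos_of_lt Fintype.one_lt_card).ne'
  obtain ⟨B, hB0, hB⟩ := exists_card_filter_eval_pow_eq_le hk f.natDegree
  refine ⟨B, hB0, fun L _ _ _ z => ?_⟩
  obtain ⟨Q, hQ⟩ : Fintype.card k - 1 ∣ Fintype.card L - 1 := by
    rw [Module.card_eq_pow_finrank (K := k) (V := L)]
    simpa using Nat.sub_dvd_pow_sub_pow (Fintype.card k) 1 (Module.finrank k L)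
  have hcard : Fintype.card L = (Fintype.card k - 1) * Q + 1 := by
    have : 0 < Fintype.card L := Fintype.card_pos
    omega
  have hinj := (algebraMap k L).injective
  have hnorm (y : L) : algebraMap k L (Algebra.norm k y) = y ^ Q := by
    rw [FiniteField.algebraMap_norm_eq_pow, Nat.card_eq_fintype_card, Nat.card_eq_fintype_card, hQ,
      Nat.mul_div_cancel_left _ (Nat.pos_of_ne_zero hk)]
  have hbound := hB L (f.map (algebraMap k L)) (by simp [hf0]) (by simpa using hf1)
    (natDegree_map _) Q hcard (algebraMap k L z)
  convert hbound using 5 with x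
  rw [← hinj.eq_iff, hnorm, eval_map_algebraMap]

theorem exists_norm_sum_mulChar_norm_aeval_le [Finite k] {χ : MulChar k ℂ} (hχ : χ ≠ 1) {f : k[X]}
    (hf0 : f.coeff 0 = 0) (hf1 : f.coeff 1 ≠ 0) :
    ∃ B : ℝ, 0 ≤ B ∧ ∀ (L : Type u) [Field L] [Fintype L] [Algebra k L],
      ‖∑ x : L, χ (Algebra.norm k (aeval x f))‖ ≤ B * √(Fintype.card L : ℝ) := by
  classical
  have := Fintype.ofFinite k
  have hf : f ≠ 0 := by
    rintro rfl
    exact hf1 (coeff_zero 1)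
  obtain ⟨B, hB0, hB⟩ := exists_card_filter_norm_aeval_eq_le hf0 hf1
  refine ⟨(Fintype.card k - 1 : ℕ) * B + f.natDegree, by positivity, fun L _ _ _ => ?_⟩
  let n (z : k) : ℕ := #{x : L | Algebra.norm k (aeval x f) = z}
  have hfiber : ∑ x : L, χ (Algebra.norm k (aeval x f)) = ∑ z, χ z * ((n z : ℝ) : ℂ) := by
    rw [← sum_fiberwise (s := univ) (g := fun x : L => Algebra.norm k (aeval x f))]
    refine sum_congr rfl fun z _ => ?_
    rw [sum_congr rfl fun x hx => by rw [(mem_filter.mp hx).2], sum_const, nsmul_eq_mul, mul_comm,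
      Complex.ofReal_natCast]
  have htotal : ∑ z, (n z : ℝ) = Fintype.card L := by
    exact_mod_cast (card_eq_sum_card_fiberwise fun _ _ => mem_coe.mpr (mem_univ _)).symm
  have hzero : (n 0 : ℝ) ≤ f.natDegree :=
    Nat.cast_le.mpr (card_filter_norm_aeval_eq_zero_le hf L)
  have hs1 : 1 ≤ √(Fintype.card L : ℝ) :=
    Real.one_le_sqrt.mpr (by exact_mod_cast Fintype.card_pos (α := L))
  have hk : ((Fintype.card k - 1 : ℕ) : ℝ) ≠ 0 :=
    Nat.cast_ne_zero.mpr (Nat.sub_pos_of_lt Fintype.one_lt_card).ne'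
  set E := (Fintype.card L : ℝ) / (Fintype.card k - 1 : ℕ) + B * √(Fintype.card L : ℝ) with hE
  calc ‖∑ x : L, χ (Algebra.norm k (aeval x f))‖ ≤ ∑ z ∈ univ.erase 0, (E - n z) :=
        hfiber ▸ norm_sum_mulChar_mul_le hχ (hB L)
    _ = (Fintype.card k - 1 : ℕ) * E - (Fintype.card L - n 0) := by
        rw [sum_sub_distrib, sum_const, card_erase_of_mem (mem_univ _), card_univ, nsmul_eq_mul,
          ← htotal, ← sum_erase_add _ _ (mem_univ (0 : k))]
        ring
    _ = (Fintype.card k - 1 : ℕ) * B * √(Fintype.card L : ℝ) + n 0 := by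
        rw [hE, mul_add, mul_div_cancel₀ _ hk]
        ring
    _ ≤ ((Fintype.card k - 1 : ℕ) * B + f.natDegree) * √(Fintype.card L : ℝ) := by
        rw [add_mul]
        gcongr
        exact hzero.trans (le_mul_of_one_le_right (by positivity) hs1)

end NormSums

section ExtensionCharpoly

open Polynomial IntermediateField

variable (k : Type*) {L : Type*} [Field k] [Field L] [Algebra k L]

/-- The characteristic polynomial of multiplication by `x` on a finite extension `L` of `k`,
encoded as the power of the minimal polynomial of `x` that has degree `[L : k]`. -/
noncomputable def extensionCharpoly (x : L) : k[X] :=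
  minpoly k x ^ (Module.finrank k L / (minpoly k x).natDegree)

section Finite

variable [FiniteDimensional k L]

theorem natDegree_minpoly_dvd_finrank (x : L) :
    (minpoly k x).natDegree ∣ Module.finrank k L :=
  minpoly.degree_dvd (Algebra.IsIntegral.isIntegral x)

theorem monic_extensionCharpoly (x : L) : (extensionCharpoly k x).Monic :=
  (minpoly.monic (Algebra.IsIntegral.isIntegral x)).pow _

theorem natDegree_extensionCharpoly (x : L) :
    (extensionCharpoly k x).natDegree = Module.finrank k L := by
  rw [extensionCharpoly, natDegree_pow,
    Nat.div_mul_cancel (natDegree_minpoly_dvd_finrank k x)]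

theorem norm_algebraMap_sub_gen (x : L) (c : k) :
    Algebra.norm k (algebraMap k k⟮x⟯ c - AdjoinSimple.gen k x) = (minpoly k x).eval c := by
  let pb := adjoin.powerBasis (Algebra.IsIntegral.isIntegral (R := k) x)
  have hgen : pb.gen = AdjoinSimple.gen k x := rfl
  rw [← minpoly_gen, ← hgen, ← charpoly_leftMulMatrix pb, Matrix.eval_charpoly,
    Algebra.norm_eq_matrix_det pb.basis, map_sub, AlgHom.commutes]
  rfl

theorem norm_algebraMap_sub (x : L) (c : k) :
    Algebra.norm k (algebraMap k L c - x) = (extensionCharpoly k x).eval c := by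
  have hint : IsIntegral k x := Algebra.IsIntegral.isIntegral x
  have hlift : algebraMap k L c - x =
      algebraMap k⟮x⟯ L (algebraMap k k⟮x⟯ c - AdjoinSimple.gen k x) := by
    rw [map_sub, AdjoinSimple.algebraMap_gen, ← IsScalarTower.algebraMap_apply]
  have hrank : Module.finrank k⟮x⟯ L = Module.finrank k L / (minpoly k x).natDegree := by
    rw [← Module.finrank_mul_finrank k k⟮x⟯ L, adjoin.finrank hint,
      Nat.mul_div_cancel_left _ (minpoly.natDegree_pos hint)]
  rw [hlift, ← Algebra.norm_norm (S := k⟮x⟯), Algebra.norm_algebraMap, map_pow,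
    norm_algebraMap_sub_gen, hrank, extensionCharpoly, eval_pow]

end Finite

variable {k}

theorem card_filter_minpoly_eq [Finite k] [Fintype L] [DecidableEq k[X]] {P : k[X]}
    (hP : Irreducible P) (hm : P.Monic) (hd : P.natDegree ∣ Module.finrank k L) :
    #{x : L | minpoly k x = P} = P.natDegree := by
  have := Fintype.ofFinite k
  have hdvd : P ∣ X ^ Fintype.card L - X := by
    rw [Module.card_eq_pow_finrank (K := k), ← Nat.card_eq_fintype_card]
    exact hP.natDegree_dvd_iff_dvd_X_pow_card_pow_sub_X.mp hd
  have hsplits : (P.map (algebraMap k L)).Splits :=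
    (FiniteField.isSplittingField_sub L k).splits'.of_dvd
      ((Polynomial.map_ne_zero_iff (algebraMap k L).injective).mpr
        (FiniteField.X_pow_card_sub_X_ne_zero k Fintype.one_lt_card))
      (Polynomial.map_dvd _ hdvd)
  rw [← card_rootSet_eq_natDegree (PerfectField.separable_of_irreducible hP) hsplits,
    ← Nat.card_eq_fintype_card, Nat.card_coe_set_eq, ← Set.ncard_coe_finset]
  congr 1
  ext x
  simp only [coe_filter, mem_univ, true_and, Set.mem_ofPred_eq, mem_rootSet]
  constructor
  · rintro rfl
    exact ⟨hP.ne_zero, minpoly.aeval _ _⟩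
  · rintro ⟨_, hx⟩
    exact (minpoly.eq_of_irreducible_of_monic hP hx hm).symm

theorem extensionCharpoly_dvd_mul_iff_of_minpoly_ne [FiniteDimensional k L] {P g : k[X]}
    (hP : Irreducible P) (hm : P.Monic) {x : L} (hx : minpoly k x ≠ P) :
    extensionCharpoly k x ∣ P * g ↔ extensionCharpoly k x ∣ g := by
  have hint : IsIntegral k x := Algebra.IsIntegral.isIntegral x
  have hcop : IsCoprime (minpoly k x) P := by
    rw [(minpoly.irreducible hint).coprime_iff_not_dvd]
    exact fun hdvd => hx (eq_of_monic_of_associated (minpoly.monic hint) hm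
      ((minpoly.irreducible hint).associated_of_dvd hP hdvd))
  exact ⟨hcop.pow_left.dvd_of_dvd_mul_left, fun h => h.mul_left _⟩

theorem extensionCharpoly_dvd_iff_of_minpoly_eq {P g : k[X]} (hP : Irreducible P) (hg : g ≠ 0)
    {x : L} (hx : minpoly k x = P) :
    extensionCharpoly k x ∣ g ↔ Module.finrank k L / P.natDegree ≤ multiplicity P g := by
  rw [extensionCharpoly, hx,
    (FiniteMultiplicity.of_prime_left hP.prime hg).pow_dvd_iff_le_multiplicity]

theorem card_filter_extensionCharpoly_dvd_mul [Finite k] [Fintype L]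
    [DecidableRel (· ∣ · : k[X] → k[X] → Prop)] {P g : k[X]}
    (hP : Irreducible P) (hm : P.Monic) (hg : g ≠ 0) :
    #{x : L | extensionCharpoly k x ∣ P * g} = #{x : L | extensionCharpoly k x ∣ g} +
      if Module.finrank k L = P.natDegree * (multiplicity P g + 1) then P.natDegree else 0 := by
  classical
  have hmul : multiplicity P (P * g) = multiplicity P g + 1 := by
    rw [multiplicity_mul hP.prime (.of_prime_left hP.prime (mul_ne_zero hP.ne_zero hg)),
      multiplicity_self, add_comm]
  have hsplit : #{x : L | extensionCharpoly k x ∣ P * g} = #{x : L | extensionCharpoly k x ∣ g} +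
      #{x : L | minpoly k x = P ∧
        Module.finrank k L = P.natDegree * (multiplicity P g + 1)} := by
    simp only [card_filter, ← sum_add_distrib]
    refine sum_congr rfl fun x _ => ?_
    by_cases hx : minpoly k x = P
    · have hd := natDegree_minpoly_dvd_finrank k x
      rw [hx] at hd
      obtain ⟨e, he⟩ := hd
      simp only [extensionCharpoly_dvd_iff_of_minpoly_eq hP hg hx,
        extensionCharpoly_dvd_iff_of_minpoly_eq hP (mul_ne_zero hP.ne_zero hg) hx, hmul, he,
        Nat.mul_div_cancel_left _ hP.natDegree_pos, Nat.mul_right_inj hP.natDegree_pos.ne', hx,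
        true_and]
      split_ifs <;> omega
    · simp only [extensionCharpoly_dvd_mul_iff_of_minpoly_ne hP hm hx, hx, false_and, if_false,
        add_zero]
  rw [hsplit]
  congr 1
  split_ifs with h
  · simpa only [h, and_true] using card_filter_minpoly_eq hP hm (h ▸ dvd_mul_right _ _)
  · simp [h]

theorem sum_card_filter_extensionCharpoly_dvd [Finite k]
    [DecidableRel (· ∣ · : k[X] → k[X] → Prop)] {L : ℕ → Type*} [∀ j, Field (L j)]
    [∀ j, Fintype (L j)] [∀ j, Algebra k (L j)] (hL : ∀ j, Module.finrank k (L j) = j + 1)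
    {g : k[X]} (hg : g ≠ 0) {J : ℕ} (hJ : g.natDegree ≤ J) :
    ∑ j ∈ range J, #{x : L j | extensionCharpoly k x ∣ g} = g.natDegree := by
  classical
  induction g using UniqueFactorizationMonoid.induction_on_prime with
  | h₁ => exact absurd rfl hg
  | h₂ u hu =>
    rw [natDegree_eq_zero_of_isUnit hu]
    refine sum_eq_zero fun j _ => ?_
    rw [card_eq_zero, filter_eq_empty_iff]
    intro x _ h
    have hdeg := natDegree_eq_zero_of_isUnit (isUnit_of_dvd_unit h hu)
    rw [natDegree_extensionCharpoly, hL] at hdeg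
    exact j.succ_ne_zero hdeg
  | h₃ g P₀ hg0 hP₀ ih =>
    set P := normalize P₀
    have hP : Irreducible P := (normalize_associated P₀).symm.irreducible hP₀.irreducible
    have hassoc : Associated (P₀ * g) (P * g) := (normalize_associated P₀).symm.mul_right g
    have hdeg : (P₀ * g).natDegree = P.natDegree + g.natDegree := by
      rw [natDegree_eq_of_degree_eq (degree_eq_degree_of_associated hassoc),
        natDegree_mul hP.ne_zero hg0]
    obtain ⟨i, hi⟩ := Nat.exists_eq_succ_of_ne_zero
      (Nat.mul_pos hP.natDegree_pos (multiplicity P g).succ_pos).ne'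
    have hmem : i ∈ range J := by
      have hdvd : P ^ (multiplicity P g + 1) ∣ P * g := by
        rw [pow_succ']
        exact mul_dvd_mul_left _ (pow_multiplicity_dvd P g)
      have hle := natDegree_le_of_dvd hdvd (mul_ne_zero hP.ne_zero hg0)
      rw [natDegree_pow, natDegree_mul hP.ne_zero hg0] at hle
      rw [mul_comm, hi] at hle
      rw [mem_range]
      omega
    calc ∑ j ∈ range J, #{x : L j | extensionCharpoly k x ∣ P₀ * g}
        = ∑ j ∈ range J, (#{x : L j | extensionCharpoly k x ∣ g} +
            if i = j then P.natDegree else 0) := by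
          refine sum_congr rfl fun j _ => ?_
          simp only [hassoc.dvd_iff_dvd_right, hL, hi, Nat.succ_eq_add_one, add_left_inj,
            card_filter_extensionCharpoly_dvd_mul hP (monic_normalize hP₀.ne_zero) hg0,
            eq_comm (a := i)]
      _ = (P₀ * g).natDegree := by
          rw [sum_add_distrib, ih hg0 (by omega), sum_ite_eq, if_pos hmem, hdeg, add_comm]

end ExtensionCharpoly

section MonicsOfDegree

open Polynomial

variable (k : Type*) [Field k] [Finite k]

theorem finite_monic_natDegree_eq (n : ℕ) : {g : k[X] | g.Monic ∧ g.natDegree = n}.Finite :=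
  have : Finite (degreeLT k n) := .of_equiv _ (degreeLTEquiv k n).toEquiv.symm
  .of_equiv _ (monicEquivDegreeLT n).symm

/-- The finite set of monic polynomials of degree `n` over a finite field. -/
noncomputable def monicsOfDegree (n : ℕ) : Finset k[X] :=
  (finite_monic_natDegree_eq k n).toFinset

variable {k}

theorem mem_monicsOfDegree {n : ℕ} {g : k[X]} :
    g ∈ monicsOfDegree k n ↔ g.Monic ∧ g.natDegree = n := by
  rw [monicsOfDegree, Set.Finite.mem_toFinset, Set.mem_ofPred_eq]

theorem monicsOfDegree_zero : monicsOfDegree k 0 = {1} := by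
  ext g
  rw [mem_monicsOfDegree, mem_singleton]
  constructor
  · rintro ⟨hm, hd⟩
    exact hm.natDegree_eq_zero.mp hd
  · rintro rfl
    exact ⟨monic_one, natDegree_one⟩

theorem sum_monicsOfDegree_one [Fintype k] {A : Type*} [AddCommMonoid A] (F : k[X] → A) :
    ∑ g ∈ monicsOfDegree k 1, F g = ∑ x, F (X - C x) := by
  refine (sum_bij (fun x _ => X - C x) (fun x _ => ?_) (fun x _ y _ h => ?_)
    (fun g hg => ?_) fun _ _ => rfl).symm
  · exact mem_monicsOfDegree.mpr ⟨monic_X_sub_C x, natDegree_X_sub_C x⟩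
  · simpa using h
  · obtain ⟨hm, hd⟩ := mem_monicsOfDegree.mp hg
    refine ⟨-g.coeff 0, mem_univ _, ?_⟩
    rw [map_neg, sub_neg_eq_add]
    exact (hm.eq_X_add_C hd).symm

theorem add_mem_monicsOfDegree {n : ℕ} {g l : k[X]} (hg : g ∈ monicsOfDegree k n)
    (hl : l.degree < n) : g + l ∈ monicsOfDegree k n := by
  obtain ⟨hm, hd⟩ := mem_monicsOfDegree.mp hg
  have hgd : g.degree = n := by rw [degree_eq_natDegree hm.ne_zero, hd]
  have hlt : l.degree < g.degree := hgd ▸ hl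
  refine mem_monicsOfDegree.mpr ⟨hm.add_of_left hlt, natDegree_eq_of_degree_eq_some ?_⟩
  rw [degree_add_eq_left_of_degree_lt hlt, hgd]

theorem sum_monicsOfDegree_add {A : Type*} [AddCommMonoid A] (F : k[X] → A) {n : ℕ} {l : k[X]}
    (hl : l.degree < n) :
    ∑ g ∈ monicsOfDegree k n, F (g + l) = ∑ g ∈ monicsOfDegree k n, F g :=
  sum_nbij' (· + l) (· + -l) (fun _ hg => add_mem_monicsOfDegree hg hl)
    (fun _ hg => add_mem_monicsOfDegree hg (by rwa [degree_neg])) (by simp) (by simp)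
    fun _ _ => rfl

theorem mul_sum_monicsOfDegree [DecidableRel (· ∣ · : k[X] → k[X] → Prop)]
    (Λ : k[X] →* ℂ) {P : k[X]} (hP : P.Monic) {n : ℕ} (hn : P.natDegree ≤ n) :
    Λ P * ∑ g ∈ monicsOfDegree k (n - P.natDegree), Λ g =
      ∑ g ∈ monicsOfDegree k n with P ∣ g, Λ g := by
  rw [mul_sum]
  refine sum_bij (fun g _ => P * g) (fun g hg => ?_)
    (fun _ _ _ _ h => mul_left_cancel₀ hP.ne_zero h) (fun g hg => ?_)
    fun _ _ => (map_mul Λ _ _).symm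
  · obtain ⟨hm, hd⟩ := mem_monicsOfDegree.mp hg
    rw [mem_filter, mem_monicsOfDegree, hP.natDegree_mul hm]
    exact ⟨⟨hP.mul hm, by omega⟩, dvd_mul_right _ _⟩
  · obtain ⟨hgn, h, rfl⟩ := mem_filter.mp hg
    obtain ⟨hm, hd⟩ := mem_monicsOfDegree.mp hgn
    have hh : h.Monic := hP.of_mul_monic_left hm
    rw [hP.natDegree_mul hh] at hd
    exact ⟨h, mem_monicsOfDegree.mpr ⟨hh, by omega⟩, rfl⟩

-- The coefficientwise form of `L'(T) = L(T) ∑ⱼ Sⱼ Tʲ`, where `L(T) = ∑ Λ(g) T ^ deg g`.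
theorem succ_mul_sum_monicsOfDegree_succ (Λ : k[X] →* ℂ) {L : ℕ → Type*} [∀ j, Field (L j)]
    [∀ j, Fintype (L j)] [∀ j, Algebra k (L j)] (hL : ∀ j, Module.finrank k (L j) = j + 1)
    (n : ℕ) :
    (n + 1) * ∑ g ∈ monicsOfDegree k (n + 1), Λ g = ∑ ij ∈ antidiagonal n,
      (∑ g ∈ monicsOfDegree k ij.1, Λ g) * ∑ x : L ij.2, Λ (extensionCharpoly k x) := by
  classical
  have hmul : ∀ j ∈ range (n + 1), ∀ x : L j,
      ∑ g ∈ monicsOfDegree k (n + 1) with extensionCharpoly k x ∣ g, Λ g =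
        (∑ g ∈ monicsOfDegree k (n - j), Λ g) * Λ (extensionCharpoly k x) := by
    intro j hj x
    have hd := natDegree_extensionCharpoly k x
    rw [hL] at hd
    rw [← mul_sum_monicsOfDegree Λ (monic_extensionCharpoly k x)
      (hd.trans_le (mem_range.mp hj)), hd, Nat.add_sub_add_right, mul_comm]
  calc (n + 1) * ∑ g ∈ monicsOfDegree k (n + 1), Λ g
      = ∑ g ∈ monicsOfDegree k (n + 1),
          ∑ j ∈ range (n + 1), (#{x : L j | extensionCharpoly k x ∣ g} : ℂ) * Λ g := by
        rw [mul_sum]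
        refine sum_congr rfl fun g hg => ?_
        obtain ⟨hm, hd⟩ := mem_monicsOfDegree.mp hg
        rw [← sum_mul, ← Nat.cast_sum,
          sum_card_filter_extensionCharpoly_dvd hL hm.ne_zero hd.le, hd, Nat.cast_succ]
    _ = ∑ j ∈ range (n + 1), ∑ x : L j,
          ∑ g ∈ monicsOfDegree k (n + 1) with extensionCharpoly k x ∣ g, Λ g := by
        rw [sum_comm]
        refine sum_congr rfl fun j _ => ?_
        simp only [sum_filter]
        rw [sum_comm]
        refine sum_congr rfl fun g _ => ?_
        rw [← sum_filter, sum_const, nsmul_eq_mul]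
    _ = ∑ j ∈ range (n + 1), (∑ g ∈ monicsOfDegree k (n - j), Λ g) *
          ∑ x : L j, Λ (extensionCharpoly k x) :=
        sum_congr rfl fun j hj => by rw [mul_sum, sum_congr rfl fun x _ => hmul j hj x]
    _ = _ := by
        rw [← Nat.sum_antidiagonal_swap, Nat.sum_antidiagonal_eq_sum_range_succ_mk]
        rfl

end MonicsOfDegree

section NewtonRecursion

open Polynomial Filter Topology

theorem not_eventually_norm_eval_derivative_le {𝕜 : Type*} [NontriviallyNormedField 𝕜]
    [CharZero 𝕜] {P : 𝕜[X]} (hP : P ≠ 0) {z : 𝕜} (hz : P.IsRoot z) (B : ℝ) :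
    ¬ ∀ᶠ w in 𝓝[≠] z, ‖P.derivative.eval w‖ ≤ B * ‖P.eval w‖ := by
  intro hB
  obtain ⟨R, hR, hRz⟩ := exists_eq_pow_rootMultiplicity_mul_and_not_dvd P hP z
  obtain ⟨m, hm⟩ := Nat.exists_eq_succ_of_ne_zero ((rootMultiplicity_pos hP).mpr hz).ne'
  rw [hm] at hR
  rw [dvd_iff_isRoot, IsRoot] at hRz
  have hderiv : ∀ w, P.derivative.eval w =
      (w - z) ^ m * ((m + 1) * R.eval w + (w - z) * R.derivative.eval w) := by
    intro w
    rw [hR]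
    simp only [derivative_mul, derivative_X_sub_C_pow, eval_mul, eval_add, eval_pow, eval_sub,
      eval_X, eval_C, Nat.succ_eq_add_one, Nat.add_sub_cancel]
    push_cast
    ring
  have hle : ∀ᶠ w in 𝓝[≠] z, ‖(m + 1) * R.eval w + (w - z) * R.derivative.eval w‖ ≤
      B * ‖(w - z) * R.eval w‖ := by
    filter_upwards [hB, self_mem_nhdsWithin] with w hw hne
    refine le_of_mul_le_mul_left ?_ (norm_pos_iff.mpr (pow_ne_zero m (sub_ne_zero.mpr hne)))
    calc ‖(w - z) ^ m‖ * _ = ‖P.derivative.eval w‖ := by rw [← norm_mul, ← hderiv]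
      _ ≤ B * ‖P.eval w‖ := hw
      _ = _ := by
        rw [hR, mul_left_comm, ← norm_mul, eval_mul, eval_pow, eval_sub, eval_X, eval_C,
          pow_succ, mul_assoc]
  have hlim := le_of_tendsto_of_tendsto (b := 𝓝[≠] z)
    (tendsto_nhdsWithin_of_tendsto_nhds (Continuous.tendsto (by fun_prop) z))
    (tendsto_nhdsWithin_of_tendsto_nhds (Continuous.tendsto (by fun_prop) z)) hle
  simp only [sub_self, zero_mul, add_zero, norm_zero, mul_zero, norm_le_zero_iff] at hlim
  exact mul_ne_zero (by exact_mod_cast m.succ_ne_zero) hRz hlim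

theorem norm_coeff_one_le_of_forall_isRoot {P : ℂ[X]} (h0 : P.coeff 0 = 1) {q : ℝ} (hq : 0 < q)
    (hroot : ∀ z, P.IsRoot z → 1 ≤ ‖z‖ * q) : ‖P.coeff 1‖ ≤ P.natDegree * q := by
  obtain hd | hd := Nat.eq_zero_or_pos P.natDegree
  · rw [coeff_eq_zero_of_natDegree_lt (by omega), norm_zero]
    positivity
  have htrail : P.natTrailingDegree = 0 :=
    natTrailingDegree_eq_zero.mpr (Or.inr (h0 ▸ one_ne_zero))
  have hmonic : P.reverse.Monic := by
    rw [Monic, reverse_leadingCoeff, trailingCoeff, htrail, h0]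
  have hroots : ∀ z ∈ (P.reverse.map (RingHom.id ℂ)).roots, ‖z‖ ≤ q := by
    intro z hz
    rw [Polynomial.map_id, mem_roots hmonic.ne_zero] at hz
    obtain rfl | hz0 := eq_or_ne z 0
    · rw [norm_zero]
      exact hq.le
    · have := invertibleOfNonzero (inv_ne_zero hz0)
      have hinv := hroot z⁻¹ <| (eval₂_reverse_eq_zero_iff (RingHom.id ℂ) z⁻¹ P).mp <| by
        rw [invOf_eq_inv, inv_inv]
        exact hz
      rwa [norm_inv, inv_mul_eq_div, one_le_div (norm_pos_iff.mpr hz0)] at hinv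
  have hcoeff := coeff_le_of_roots_le (P.natDegree - 1) hmonic (IsAlgClosed.splits _) hroots
  rwa [Polynomial.map_id, coeff_reverse, reverse_natDegree, htrail, Nat.sub_zero,
    revAt_le (Nat.sub_le _ _), Nat.sub_sub_self hd, pow_one, Nat.choose_symm hd,
    Nat.choose_one_right, mul_comm] at hcoeff

variable {P : ℂ[X]} {S : ℕ → ℂ}

theorem eval_derivative_eq_eval_mul_tsum
    (hrec : ∀ n : ℕ, (n + 1) * P.coeff (n + 1) = ∑ ij ∈ antidiagonal n, P.coeff ij.1 * S ij.2)
    {T : ℂ} (hsum : Summable fun j => ‖S j * T ^ j‖) :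
    P.derivative.eval T = P.eval T * ∑' j, S j * T ^ j := by
  have hzero : ∀ (Q : ℂ[X]), ∀ n ∉ range (Q.natDegree + 1), Q.coeff n * T ^ n = 0 := by
    intro Q n hn
    rw [coeff_eq_zero_of_natDegree_lt (by simpa using hn), zero_mul]
  have heval : ∀ Q : ℂ[X], Q.eval T = ∑' n, Q.coeff n * T ^ n := fun Q => by
    rw [eval_eq_sum_range, tsum_eq_sum (hzero Q)]
  have hP : Summable fun n => ‖P.coeff n * T ^ n‖ :=
    summable_of_ne_finset_zero fun n hn => by rw [hzero P n hn, norm_zero]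
  rw [heval, heval, tsum_mul_tsum_eq_tsum_sum_antidiagonal_of_summable_norm hP hsum]
  refine tsum_congr fun n => ?_
  rw [coeff_derivative, mul_comm (P.coeff _), hrec, sum_mul]
  refine sum_congr rfl fun ij hij => ?_
  rw [← mem_antidiagonal.mp hij, pow_add]
  ring

theorem norm_tsum_mul_pow_le {q A : ℝ} (hq : 0 ≤ q) (hS : ∀ j, ‖S j‖ ≤ A * q ^ j) {ρ : ℝ}
    (hρ : ρ * q < 1) {T : ℂ} (hT : ‖T‖ ≤ ρ) :
    (Summable fun j => ‖S j * T ^ j‖) ∧ ‖∑' j, S j * T ^ j‖ ≤ A * (1 - ρ * q)⁻¹ := by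
  have hρ0 : 0 ≤ ρ := (norm_nonneg T).trans hT
  have hA : 0 ≤ A := by simpa using (norm_nonneg _).trans (hS 0)
  have hgeom : HasSum (fun j => A * (ρ * q) ^ j) (A * (1 - ρ * q)⁻¹) :=
    (hasSum_geometric_of_lt_one (by positivity) hρ).mul_left A
  have hle : ∀ j, ‖S j * T ^ j‖ ≤ A * (ρ * q) ^ j := fun j =>
    calc ‖S j * T ^ j‖ = ‖S j‖ * ‖T‖ ^ j := by rw [norm_mul, norm_pow]
      _ ≤ A * q ^ j * ρ ^ j := by gcongr; exact hS j
      _ = A * (ρ * q) ^ j := by ring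
  exact ⟨.of_nonneg_of_le (fun _ => norm_nonneg _) hle hgeom.summable,
    tsum_of_norm_bounded hgeom hle⟩

-- Inside the disc of convergence of `∑ⱼ Sⱼ Tʲ` the logarithmic derivative of `P` is bounded.
theorem one_le_norm_mul_of_isRoot {q A : ℝ} (hq : 0 < q) (hP : P ≠ 0)
    (hS : ∀ j, ‖S j‖ ≤ A * q ^ j)
    (hrec : ∀ n : ℕ, (n + 1) * P.coeff (n + 1) = ∑ ij ∈ antidiagonal n, P.coeff ij.1 * S ij.2)
    {z : ℂ} (hz : P.IsRoot z) : 1 ≤ ‖z‖ * q := by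
  by_contra! hlt
  obtain ⟨ρ, hzρ, hρ⟩ : ∃ ρ, ‖z‖ < ρ ∧ ρ < 1 / q := exists_between (by rwa [lt_div_iff₀ hq])
  refine not_eventually_norm_eval_derivative_le hP hz (A * (1 - ρ * q)⁻¹) ?_
  filter_upwards [nhdsWithin_le_nhds (continuous_norm.tendsto z (gt_mem_nhds hzρ))] with T hT
  obtain ⟨hsum, hle⟩ := norm_tsum_mul_pow_le hq.le hS ((lt_div_iff₀ hq).mp hρ) (le_of_lt hT)
  rw [eval_derivative_eq_eval_mul_tsum hrec hsum, norm_mul, mul_comm]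
  gcongr

theorem norm_apply_one_le_of_newton {c : ℕ → ℂ} (hc0 : c 0 = 1) {m : ℕ}
    (hc : ∀ n, m < n → c n = 0) {q A : ℝ} (hq : 0 < q) (hS : ∀ j, ‖S j‖ ≤ A * q ^ j)
    (hrec : ∀ n : ℕ, (n + 1) * c (n + 1) = ∑ ij ∈ antidiagonal n, c ij.1 * S ij.2) :
    ‖c 1‖ ≤ m * q := by
  set P : ℂ[X] := ∑ n ∈ range (m + 1), C (c n) * X ^ n with hP
  have hcoeff : ∀ n, P.coeff n = c n := fun n => by
    simp only [hP, finsetSum_coeff, coeff_C_mul_X_pow, sum_ite_eq, mem_range, Nat.lt_succ_iff]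
    exact ite_eq_left_iff.mpr fun h => (hc n (not_le.mp h)).symm
  have hdeg : P.natDegree ≤ m :=
    natDegree_le_iff_coeff_eq_zero.mpr fun n hn => (hcoeff n).trans (hc n hn)
  have hne : P ≠ 0 := fun h => by simpa [h, hc0] using hcoeff 0
  simp only [← hcoeff] at hc0 hrec ⊢
  refine (norm_coeff_one_le_of_forall_isRoot hc0 hq fun z hz =>
    one_le_norm_mul_of_isRoot hq hne hS hrec hz).trans ?_
  gcongr

end NewtonRecursion

section WeilBound

open Polynomial

universe u

/-- The completely multiplicative function `g ↦ χ (∏ c ∈ s, g(c) ^ e c)` on polynomials. Its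
generating series over monic polynomials is the `L`-function of `x ↦ χ (∏ c ∈ s, (c - x) ^ e c)`. -/
noncomputable def evalMulChar {k : Type*} [Field k] (χ : MulChar k ℂ) (s : Finset k) (e : k → ℕ) :
    k[X] →* ℂ where
  toFun g := χ (∏ c ∈ s, g.eval c ^ e c)
  map_one' := by simp only [eval_one, one_pow, prod_const_one, map_one]
  map_mul' f g := by simp only [eval_mul, mul_pow, prod_mul_distrib, map_mul]

variable {k : Type*} [Field k]

theorem evalMulChar_apply (χ : MulChar k ℂ) (s : Finset k) (e : k → ℕ) (g : k[X]) :
    evalMulChar χ s e g = χ (∏ c ∈ s, g.eval c ^ e c) :=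
  rfl

theorem sum_evalMulChar_add_C_mul_basis [Fintype k] [DecidableEq k] {χ : MulChar k ℂ} (hχ : χ ≠ 1)
    {s : Finset k} {e : k → ℕ} {c₀ : k} (hc₀ : c₀ ∈ s) (he : e c₀ = 1) (g : k[X]) :
    ∑ t, evalMulChar χ s e (g + C t * Lagrange.basis s id c₀) = 0 := by
  have hinj : Set.InjOn (id : k → k) s := Function.injective_id.injOn
  have hval : ∀ t, evalMulChar χ s e (g + C t * Lagrange.basis s id c₀) =
      χ (g.eval c₀ + t) * χ (∏ c ∈ s.erase c₀, g.eval c ^ e c) := by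
    intro t
    rw [evalMulChar_apply, ← mul_prod_erase s _ hc₀, he, pow_one, ← map_mul]
    have hself := Lagrange.eval_basis_self hinj hc₀
    rw [id] at hself
    simp only [eval_add, eval_mul, eval_C, hself, mul_one]
    congr 2
    refine prod_congr rfl fun c hc => ?_
    have hne := Lagrange.eval_basis_of_ne (v := id) (ne_of_mem_erase hc).symm (mem_of_mem_erase hc)
    rw [id] at hne
    rw [hne, mul_zero, add_zero]
  rw [sum_congr rfl fun t _ => hval t, ← sum_mul,
    Fintype.sum_equiv (Equiv.addLeft (g.eval c₀)) (fun t => χ (g.eval c₀ + t)) χ fun _ => rfl,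
    MulChar.sum_eq_zero_of_ne_one hχ, zero_mul]

theorem sum_monicsOfDegree_evalMulChar_eq_zero [Finite k] {χ : MulChar k ℂ} (hχ : χ ≠ 1)
    {s : Finset k} {e : k → ℕ} {c₀ : k} (hc₀ : c₀ ∈ s) (he : e c₀ = 1) {n : ℕ} (hn : #s ≤ n) :
    ∑ g ∈ monicsOfDegree k n, evalMulChar χ s e g = 0 := by
  classical
  have := Fintype.ofFinite k
  have hdeg : ∀ t, (C t * Lagrange.basis s id c₀).degree < (n : WithBot ℕ) := by
    intro t
    rw [← smul_eq_C_mul]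
    refine (degree_smul_le t _).trans_lt ?_
    rw [Lagrange.degree_basis Function.injective_id.injOn hc₀]
    have := card_pos.mpr ⟨c₀, hc₀⟩
    exact_mod_cast (by omega : #s - 1 < n)
  have hsum : (Fintype.card k : ℂ) * ∑ g ∈ monicsOfDegree k n, evalMulChar χ s e g = 0 :=
    calc (Fintype.card k : ℂ) * ∑ g ∈ monicsOfDegree k n, evalMulChar χ s e g
        = ∑ t, ∑ g ∈ monicsOfDegree k n,
            evalMulChar χ s e (g + C t * Lagrange.basis s id c₀) := by
          rw [sum_congr rfl fun t _ => sum_monicsOfDegree_add (evalMulChar χ s e) (hdeg t),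
            sum_const, card_univ, nsmul_eq_mul]
      _ = 0 := by
          rw [sum_comm]
          exact sum_eq_zero fun g _ => sum_evalMulChar_add_C_mul_basis hχ hc₀ he g
  exact (mul_eq_zero.mp hsum).resolve_left (Nat.cast_ne_zero.mpr Fintype.card_ne_zero)

theorem exists_norm_sum_evalMulChar_extensionCharpoly_le [Finite k] {χ : MulChar k ℂ} (hχ : χ ≠ 1)
    {s : Finset k} {e : k → ℕ} (h0 : 0 ∈ s) (he : e 0 = 1) :
    ∃ B : ℝ, 0 ≤ B ∧ ∀ (L : Type u) [Field L] [Fintype L] [Algebra k L],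
      ‖∑ x : L, evalMulChar χ s e (extensionCharpoly k x)‖ ≤ B * √(Fintype.card L) := by
  classical
  set h : k[X] := ∏ c ∈ s.erase 0, (C c - X) ^ e c with hh
  have hf : ∏ c ∈ s, (C c - X) ^ e c = -(X * h) := by
    rw [← mul_prod_erase s _ h0, he, pow_one, map_zero, zero_sub, neg_mul]
  have hh0 : h.coeff 0 ≠ 0 := by
    rw [coeff_zero_eq_eval_zero, hh, eval_prod, prod_ne_zero_iff]
    intro c hc
    simpa only [eval_pow, eval_sub, eval_C, eval_X, sub_zero] using
      pow_ne_zero _ (ne_of_mem_erase hc)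
  obtain ⟨B, hB0, hB⟩ := exists_norm_sum_mulChar_norm_aeval_le hχ
    (f := ∏ c ∈ s, (C c - X) ^ e c) (by rw [hf, coeff_neg, mul_coeff_zero, coeff_X_zero,
      zero_mul, neg_zero]) (by rwa [hf, coeff_neg, coeff_X_mul, neg_ne_zero])
  refine ⟨B, hB0, fun L _ _ _ => (hB L).trans' (le_of_eq ?_)⟩
  congr 1
  refine sum_congr rfl fun x _ => ?_
  simp only [evalMulChar_apply, map_prod, map_pow, map_sub, aeval_C, aeval_X,
    norm_algebraMap_sub]

theorem norm_sum_mulChar_prod_sub_pow_le [Fintype k] {χ : MulChar k ℂ} (hχ : χ ≠ 1)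
    {s : Finset k} {e : k → ℕ} (h0 : 0 ∈ s) (he : e 0 = 1) :
    ‖∑ x, χ (∏ c ∈ s, (c - x) ^ e c)‖ ≤ (#s - 1 : ℕ) * √(Fintype.card k) := by
  obtain ⟨p, _⟩ := CharP.exists k
  have : Fact p.Prime := ⟨CharP.char_is_prime k p⟩
  let L : ℕ → Type := fun j => FiniteField.Extension k p (j + 1)
  have (j : ℕ) : Fintype (L j) := Fintype.ofFinite _
  have hL : ∀ j, Module.finrank k (L j) = j + 1 := fun j => FiniteField.finrank_extension k p _
  obtain ⟨B, _, hB⟩ := exists_norm_sum_evalMulChar_extensionCharpoly_le hχ h0 he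
  set q : ℝ := √(Fintype.card k)
  have hS : ∀ j, ‖∑ x : L j, evalMulChar χ s e (extensionCharpoly k x)‖ ≤ B * q * q ^ j := by
    intro j
    refine (hB (L j)).trans_eq ?_
    have hsqrt : √((Fintype.card k : ℝ) ^ (j + 1)) = q ^ (j + 1) := by
      rw [Real.sqrt_eq_iff_mul_self_eq (by positivity) (by positivity), ← mul_pow,
        Real.mul_self_sqrt (by positivity)]
    rw [Module.card_eq_pow_finrank (K := k), hL, Nat.cast_pow, hsqrt, pow_succ]
    ring
  have hq : 0 < q := Real.sqrt_pos.mpr (Nat.cast_pos.mpr Fintype.card_pos)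
  have hcoeff := norm_apply_one_le_of_newton
    (c := fun n => ∑ g ∈ monicsOfDegree k n, evalMulChar χ s e g) (m := #s - 1)
    (by rw [monicsOfDegree_zero, sum_singleton, map_one])
    (fun n hn => sum_monicsOfDegree_evalMulChar_eq_zero hχ h0 he (by omega)) hq hS
    (succ_mul_sum_monicsOfDegree_succ _ hL)
  simpa only [sum_monicsOfDegree_one, evalMulChar_apply, eval_sub, eval_X, eval_C] using hcoeff

theorem norm_sum_mulChar_prod_add_pow_le [Fintype k] {χ : MulChar k ℂ} (hχ : χ ≠ 1) {ι : Type*}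
    [Fintype ι] {v : ι → k} {e : ι → ℕ} {i₀ : ι} (he : e i₀ = 1)
    (hv : ∀ i, i ≠ i₀ → v i ≠ v i₀) :
    ‖∑ x, χ (∏ i, (x + v i) ^ e i)‖ ≤ (Fintype.card ι - 1 : ℕ) * √(Fintype.card k) := by
  classical
  set s : Finset k := univ.image fun i => v i - v i₀
  set e' : k → ℕ := fun c => ∑ i with v i - v i₀ = c, e i with he'
  have h0 : (0 : k) ∈ s := mem_image.mpr ⟨i₀, mem_univ _, sub_self _⟩
  have hfiber : ({i | v i - v i₀ = 0} : Finset ι) = {i₀} := by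
    ext i
    rw [mem_filter_univ, mem_singleton, sub_eq_zero]
    exact ⟨fun h => by_contra fun hne => hv i hne h, fun h => h ▸ rfl⟩
  have he0 : e' 0 = 1 := by simp only [he', hfiber, sum_singleton, he]
  have hsum : ∑ x, χ (∏ i, (x + v i) ^ e i) = ∑ x, χ (∏ c ∈ s, (c - x) ^ e' c) := by
    refine Fintype.sum_equiv ((Equiv.neg k).trans (Equiv.subRight (v i₀))) _ _ fun x => ?_
    rw [← prod_fiberwise_of_maps_to (s := univ) (t := s) (g := fun i => v i - v i₀)
      fun i _ => mem_image_of_mem _ (mem_univ i)]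
    congr 1
    refine prod_congr rfl fun c _ => ?_
    rw [he', ← prod_pow_eq_pow_sum]
    refine prod_congr rfl fun i hi => ?_
    rw [← (mem_filter.mp hi).2]
    simp only [Equiv.trans_apply, Equiv.neg_apply, Equiv.subRight_apply]
    ring
  rw [hsum]
  refine (norm_sum_mulChar_prod_sub_pow_le hχ h0 he0).trans ?_
  gcongr
  exact card_image_le

end WeilBound

section Moment

open ComplexConjugate

theorem conj_mulChar_apply {k : Type*} [Field k] [Fintype k] (χ : MulChar k ℂ) (y : k) :
    conj (χ y) = χ (y ^ (2 * Fintype.card k - 3)) := by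
  have hk := Fintype.one_lt_card (α := k)
  have hinv : y⁻¹ = y ^ (2 * Fintype.card k - 3) := by
    obtain rfl | hy := eq_or_ne y 0
    · rw [inv_zero, zero_pow (by omega)]
    · refine (eq_inv_of_mul_eq_one_left ?_).symm
      rw [← pow_succ, show 2 * Fintype.card k - 3 + 1 = (Fintype.card k - 1) * 2 by omega,
        pow_mul, FiniteField.pow_card_sub_one_eq_one y hy, one_pow]
  rw [← hinv, ← MulChar.inv_apply', ← MulChar.star_apply', starRingEnd_apply]

variable {k : Type*} [Field k] [Fintype k]

theorem norm_sum_prod_mulChar_mul_prod_conj_le_of_inl {χ : MulChar k ℂ} (hχ : χ ≠ 1) {ι : Type*}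
    [Fintype ι] {u : ι ⊕ ι → k} {i₀ : ι} (hu : ∀ i, i ≠ .inl i₀ → u i ≠ u (.inl i₀)) :
    ‖∑ x, (∏ i, χ (x + u (.inl i))) * ∏ i, conj (χ (x + u (.inr i)))‖ ≤
      2 * Fintype.card ι * √(Fintype.card k) := by
  have h := norm_sum_mulChar_prod_add_pow_le hχ
    (e := Sum.elim (fun _ => 1) fun _ => 2 * Fintype.card k - 3) (Sum.elim_inl _ _ i₀) hu
  simp only [Fintype.prod_sum_type, map_mul, map_prod, Sum.elim_inl, Sum.elim_inr, pow_one,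
    ← conj_mulChar_apply, Fintype.card_sum] at h
  refine h.trans ?_
  gcongr
  exact_mod_cast (by omega : _ ≤ 2 * Fintype.card ι)

theorem norm_sum_prod_mulChar_mul_prod_conj_le {χ : MulChar k ℂ} (hχ : χ ≠ 1) {ι : Type*}
    [Fintype ι] {u : ι ⊕ ι → k} {i₀ : ι ⊕ ι} (hu : ∀ i, i ≠ i₀ → u i ≠ u i₀) :
    ‖∑ x, (∏ i, χ (x + u (.inl i))) * ∏ i, conj (χ (x + u (.inr i)))‖ ≤
      2 * Fintype.card ι * √(Fintype.card k) := by
  obtain i₀ | i₀ := i₀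
  · exact norm_sum_prod_mulChar_mul_prod_conj_le_of_inl hχ hu
  · have h := norm_sum_prod_mulChar_mul_prod_conj_le_of_inl hχ (u := u ∘ Sum.swap) (i₀ := i₀)
      fun i hi => hu _ fun h' => hi (by rw [← Sum.swap_swap i, h', Sum.swap_inr])
    rw [← RCLike.norm_conj, map_sum] at h
    simpa only [map_mul, map_prod, RingHomCompTriple.comp_apply, RingHom.id_apply,
      Function.comp_apply, Sum.swap_inl, Sum.swap_inr, mul_comm] using h

theorem norm_sum_prod_mulChar_mul_prod_conj_le_card (χ : MulChar k ℂ) {ι : Type*} [Fintype ι]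
    (u : ι ⊕ ι → k) :
    ‖∑ x, (∏ i, χ (x + u (.inl i))) * ∏ i, conj (χ (x + u (.inr i)))‖ ≤ Fintype.card k := by
  have hterm : ∀ x ∈ univ,
      ‖(∏ i, χ (x + u (.inl i))) * ∏ i, conj (χ (x + u (.inr i)))‖ ≤ 1 := by
    intro x _
    rw [norm_mul, norm_prod, norm_prod]
    simp only [RCLike.norm_conj]
    exact mul_le_one₀ (prod_le_one (fun _ _ => norm_nonneg _) fun _ _ => norm_mulChar_le_one χ _)
      (prod_nonneg fun _ _ => norm_nonneg _)
      (prod_le_one (fun _ _ => norm_nonneg _) fun _ _ => norm_mulChar_le_one χ _)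
  simpa using norm_sum_le_of_le _ hterm

theorem sum_sum_norm_sum_mul_conj_pow {X α : Type*} [Fintype X] [Fintype α] (f : X → α → ℂ)
    (r : ℕ) :
    ∑ x, ∑ y, ‖∑ v, f x v * conj (f y v)‖ ^ (2 * r) =
      ∑ t : Fin r ⊕ Fin r → α,
        ‖∑ x, (∏ i, f x (t (.inl i))) * ∏ i, conj (f x (t (.inr i)))‖ ^ 2 := by
  classical
  refine Complex.ofReal_injective ?_
  push_cast
  have hleft : ∀ x y, (‖∑ v, f x v * conj (f y v)‖ : ℂ) ^ (2 * r) = ∑ t : Fin r ⊕ Fin r → α,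
      ((∏ i, f x (t (.inl i))) * ∏ i, conj (f x (t (.inr i)))) *
        conj ((∏ i, f y (t (.inl i))) * ∏ i, conj (f y (t (.inr i)))) := by
    intro x y
    rw [pow_mul, ← Complex.mul_conj', mul_pow, ← map_pow, Fintype.sum_pow, map_sum, sum_mul_sum,
      ← Fintype.sum_prod_type']
    refine Fintype.sum_equiv (Equiv.sumArrowEquivProdArrow _ _ _).symm _ _ fun ⟨a, b⟩ => ?_
    simp only [Equiv.sumArrowEquivProdArrow, Equiv.coe_fn_symm_mk, Sum.elim_inl, Sum.elim_inr,
      map_mul, map_prod, prod_mul_distrib, RingHomCompTriple.comp_apply, RingHom.id_apply]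
    ring
  simp only [hleft, ← Complex.mul_conj', map_sum, sum_mul_sum]
  rw [sum_congr rfl fun x _ => sum_comm, sum_comm]

theorem card_filter_card_image_le {ι α : Type*} [Fintype ι] [Nonempty ι] [Fintype α]
    [DecidableEq ι] [DecidableEq α] (r : ℕ) :
    #{t : ι → α | #(univ.image t) ≤ r} ≤ r ^ Fintype.card ι * Fintype.card α ^ r := by
  have hsub : ({t | #(univ.image t) ≤ r} : Finset (ι → α)) ⊆
      univ.image fun ja : (ι → Fin r) × (Fin r → α) => ja.2 ∘ ja.1 := by
    intro t ht
    set e := (univ.image t).equivFin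
    refine mem_image.mpr ⟨(fun i => Fin.castLE ((mem_filter_univ t).mp ht)
      (e ⟨t i, mem_image_of_mem _ (mem_univ i)⟩), fun m => if h : (m : ℕ) < #(univ.image t)
        then e.symm ⟨m, h⟩ else t (Classical.arbitrary ι)), mem_univ _, ?_⟩
    funext i
    simp
  refine (card_le_card hsub).trans (card_image_le.trans_eq ?_)
  rw [card_univ, Fintype.card_prod, Fintype.card_fun, Fintype.card_fun, Fintype.card_fin]

theorem card_filter_forall_exists_ne_apply_eq_le {ι α : Type*} [Fintype ι] [Nonempty ι]
    [Fintype α] [DecidableEq ι] [DecidableEq α] {r : ℕ} (hr : Fintype.card ι = 2 * r) :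
    #{t : ι → α | ∀ i, ∃ j, j ≠ i ∧ t j = t i} ≤ r ^ (2 * r) * Fintype.card α ^ r := by
  rw [← hr]
  refine (card_le_card fun t ht => ?_).trans (card_filter_card_image_le r)
  rw [mem_filter_univ] at ht ⊢
  have himage := mul_card_image_le_card (f := t) univ 2 fun a ha => by
    obtain ⟨i, _, rfl⟩ := mem_image.mp ha
    obtain ⟨j, hji, hj⟩ := ht i
    exact one_lt_card.mpr ⟨j, by simp [hj], i, by simp, hji⟩
  rw [card_univ, hr] at himage
  omega

theorem sum_sum_norm_sum_mulChar_mul_conj_pow_le {χ : MulChar k ℂ} (hχ : χ ≠ 1) {r : ℕ}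
    (hr : r ≠ 0) {α : Type*} [Fintype α] {φ : α → k} (hφ : Function.Injective φ)
    (hα : Fintype.card α ^ r ≤ Fintype.card k) :
    ∑ x, ∑ y, ‖∑ v, χ (x + φ v) * conj (χ (y + φ v))‖ ^ (2 * r) ≤
      ((r : ℝ) ^ (2 * r) + 4 * r ^ 2) * (Fintype.card k : ℝ) ^ 3 := by
  classical
  set q : ℝ := ((Fintype.card k : ℕ) : ℝ) with hq
  have : NeZero r := ⟨hr⟩
  set W : (Fin r ⊕ Fin r → α) → ℂ := fun t =>
    ∑ x, (∏ i, χ (x + φ (t (.inl i)))) * ∏ i, conj (χ (x + φ (t (.inr i))))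
  have hαq : (Fintype.card α : ℝ) ^ r ≤ q := by rw [hq]; exact_mod_cast hα
  have hpaired : ∑ t with ∀ i, ∃ j, j ≠ i ∧ t j = t i, ‖W t‖ ^ 2 ≤ (r : ℝ) ^ (2 * r) * q ^ 3 := by
    refine (sum_le_card_nsmul _ _ (q ^ 2) fun t _ => ?_).trans ?_
    · gcongr
      exact norm_sum_prod_mulChar_mul_prod_conj_le_card χ (φ ∘ t)
    · have hcard : (#{t : Fin r ⊕ Fin r → α | ∀ i, ∃ j, j ≠ i ∧ t j = t i} : ℝ) ≤
          (r : ℝ) ^ (2 * r) * (Fintype.card α : ℝ) ^ r := by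
        exact_mod_cast card_filter_forall_exists_ne_apply_eq_le
          (by rw [Fintype.card_sum, Fintype.card_fin, two_mul])
      calc _ ≤ (r : ℝ) ^ (2 * r) * (Fintype.card α : ℝ) ^ r * q ^ 2 := by
            rw [nsmul_eq_mul]
            gcongr
        _ ≤ (r : ℝ) ^ (2 * r) * q * q ^ 2 := by gcongr
        _ = _ := by ring
  have hunpaired : ∑ t with ¬ ∀ i, ∃ j, j ≠ i ∧ t j = t i, ‖W t‖ ^ 2 ≤ 4 * (r : ℝ) ^ 2 * q ^ 3 := by
    refine (sum_le_card_nsmul _ _ (4 * (r : ℝ) ^ 2 * q) fun t ht => ?_).trans ?_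
    · have ht' := (mem_filter_univ t).mp ht
      push Not at ht'
      obtain ⟨i₀, hi₀⟩ := ht'
      have hW := norm_sum_prod_mulChar_mul_prod_conj_le hχ (u := φ ∘ t)
        fun i hi h => hi₀ i hi (hφ h)
      rw [Fintype.card_fin] at hW
      calc ‖W t‖ ^ 2 ≤ (2 * r * √q) ^ 2 := by gcongr; exact hW
        _ = _ := by rw [mul_pow, Real.sq_sqrt (by positivity)]; ring
    · have hcard : (#{t : Fin r ⊕ Fin r → α | ¬ ∀ i, ∃ j, j ≠ i ∧ t j = t i} : ℝ) ≤ q ^ 2 :=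
        calc _ ≤ (Fintype.card (Fin r ⊕ Fin r → α) : ℝ) := mod_cast card_le_univ _
          _ = ((Fintype.card α : ℝ) ^ r) ^ 2 := by
            rw [Fintype.card_fun, Fintype.card_sum, Fintype.card_fin, ← two_mul, mul_comm 2,
              pow_mul, Nat.cast_pow, Nat.cast_pow]
          _ ≤ _ := by gcongr
      calc _ ≤ q ^ 2 * (4 * (r : ℝ) ^ 2 * q) := by
            rw [nsmul_eq_mul]
            gcongr
        _ = _ := by ring
  rw [sum_sum_norm_sum_mul_conj_pow (fun x v => χ (x + φ v)), add_mul,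
    ← sum_filter_add_sum_filter_not univ fun t : Fin r ⊕ Fin r → α => ∀ i, ∃ j, j ≠ i ∧ t j = t i]
  exact add_le_add hpaired hunpaired

end Moment

section DivisorBound

variable {ε : ℝ}

theorem add_one_le_mul_rpow_pow (hε : 0 < ε) {q : ℝ} (hq : 2 ≤ q) (v : ℕ) :
    (v + 1 : ℝ) ≤ (1 + 1 / (ε * Real.log 2)) * (q ^ ε) ^ v := by
  have : 0 < Real.log 2 := Real.log_pos one_lt_two
  calc (v + 1 : ℝ) = 1 / (ε * Real.log 2) * (ε * Real.log 2 * v) + 1 := by field_simp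
    _ ≤ (1 + 1 / (ε * Real.log 2)) * (ε * Real.log 2 * v + 1) := by
        have h1 : 0 ≤ 1 / (ε * Real.log 2) := by positivity
        have h2 : 0 ≤ ε * Real.log 2 * v := by positivity
        linarith
    _ ≤ (1 + 1 / (ε * Real.log 2)) * Real.exp (ε * Real.log 2 * v) := by
        gcongr
        exact Real.add_one_le_exp _
    _ = (1 + 1 / (ε * Real.log 2)) * ((2 : ℝ) ^ ε) ^ v := by
        rw [Real.rpow_def_of_pos two_pos, ← Real.exp_nat_mul]
        ring_nf
    _ ≤ _ := by gcongr

theorem add_one_le_rpow_pow (hε : 0 < ε) {q : ℝ} (hq : 2 ^ (1 / ε) ≤ q) (v : ℕ) :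
    (v + 1 : ℝ) ≤ (q ^ ε) ^ v := by
  have hq2 : (2 : ℝ) ≤ q ^ ε := by
    calc (2 : ℝ) = ((2 : ℝ) ^ (1 / ε)) ^ ε := by
          rw [← Real.rpow_mul zero_le_two, one_div, inv_mul_cancel₀ hε.ne', Real.rpow_one]
      _ ≤ _ := by gcongr
  calc (v + 1 : ℝ) ≤ 2 ^ v := mod_cast Nat.lt_two_pow_self
    _ ≤ _ := by gcongr

theorem natCast_rpow_eq_prod_primeFactors (ε : ℝ) {n : ℕ} (hn : n ≠ 0) :
    (n : ℝ) ^ ε = ∏ q ∈ n.primeFactors, ((q : ℝ) ^ ε) ^ n.factorization q := by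
  conv_lhs => rw [← Nat.prod_factorization_pow_eq_self hn]
  rw [Nat.prod_factorization_eq_prod_primeFactors, Nat.cast_prod,
    ← Real.finsetProd_rpow _ _ fun _ _ => Nat.cast_nonneg _]
  refine prod_congr rfl fun q _ => ?_
  rw [Nat.cast_pow, Real.rpow_pow_comm (Nat.cast_nonneg q)]

theorem exists_card_divisors_le_mul_rpow (hε : 0 < ε) :
    ∃ C : ℝ, 1 ≤ C ∧ ∀ n : ℕ, n ≠ 0 → (#n.divisors : ℝ) ≤ C * (n : ℝ) ^ ε := by
  have : 0 < Real.log 2 := Real.log_pos one_lt_two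
  set c : ℝ := 1 + 1 / (ε * Real.log 2)
  have hc1 : 1 ≤ c := le_add_of_nonneg_right (by positivity)
  set P : ℕ := ⌈(2 : ℝ) ^ (1 / ε)⌉₊
  refine ⟨c ^ P, one_le_pow₀ hc1, fun n hn => ?_⟩
  have hfactor : ∀ q ∈ n.primeFactors, (n.factorization q + 1 : ℝ) ≤
      (if q < P then c else 1) * ((q : ℝ) ^ ε) ^ n.factorization q := by
    intro q hq
    split_ifs with hqP
    · exact add_one_le_mul_rpow_pow hε (mod_cast (Nat.prime_of_mem_primeFactors hq).two_le) _
    · rw [one_mul]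
      exact add_one_le_rpow_pow hε (Nat.ceil_le.mp (not_lt.mp hqP)) _
  have hsmall : #{q ∈ n.primeFactors | q < P} ≤ P :=
    (card_le_card fun q hq => mem_range.mpr (mem_filter.mp hq).2).trans_eq (card_range P)
  calc (#n.divisors : ℝ) = ∏ q ∈ n.primeFactors, (n.factorization q + 1 : ℝ) := by
        rw [Nat.card_divisors hn]
        push_cast
        rfl
    _ ≤ ∏ q ∈ n.primeFactors, (if q < P then c else 1) * ((q : ℝ) ^ ε) ^ n.factorization q :=
        prod_le_prod (fun _ _ => by positivity) hfactor
    _ = c ^ #{q ∈ n.primeFactors | q < P} * (n : ℝ) ^ ε := by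
        rw [prod_mul_distrib, prod_ite, prod_const, prod_const_one, mul_one,
          natCast_rpow_eq_prod_primeFactors ε hn]
    _ ≤ c ^ P * (n : ℝ) ^ ε := by gcongr

end DivisorBound

section FiberCounting

theorem card_le_one_add_div_of_separated {ι : Type*} (s : Finset ι) (f : ι → ℝ) {L δ : ℝ}
    (hδ : 0 < δ) (hL : 0 ≤ L) (hf : ∀ i ∈ s, |f i| ≤ L)
    (hsep : ∀ i ∈ s, ∀ j ∈ s, i ≠ j → δ ≤ |f i - f j|) :
    (#s : ℝ) ≤ 1 + 2 * L / δ := by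
  have hnonneg : ∀ i ∈ s, 0 ≤ (f i + L) / δ := fun i hi =>
    div_nonneg (by linarith [(abs_le.mp (hf i hi)).1]) hδ.le
  have hmaps : ∀ i ∈ s, ⌊(f i + L) / δ⌋₊ ∈ range (⌊2 * L / δ⌋₊ + 1) := fun i hi => by
    rw [mem_range, Nat.lt_succ_iff]
    gcongr
    linarith [(abs_le.mp (hf i hi)).2]
  have hinj : Set.InjOn (fun i => ⌊(f i + L) / δ⌋₊) s := by
    intro i hi j hj hij
    by_contra hne
    have hlt := Int.abs_sub_lt_one_of_floor_eq_floor (a := (f i + L) / δ) (b := (f j + L) / δ) (by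
      rw [← Int.natCast_floor_eq_floor (hnonneg i hi), ← Int.natCast_floor_eq_floor (hnonneg j hj)]
      exact congrArg _ hij)
    rw [← sub_div, add_sub_add_right_eq_sub, abs_div, abs_of_pos hδ, div_lt_one hδ] at hlt
    exact (hsep i hi j hj hne).not_gt hlt
  have hcard := card_le_card_of_injOn _ hmaps hinj
  rw [card_range] at hcard
  calc (#s : ℝ) ≤ ⌊2 * L / δ⌋₊ + 1 := mod_cast hcard
    _ ≤ 2 * L / δ + 1 := by gcongr; exact Nat.floor_le (by positivity)
    _ = _ := add_comm _ _

variable {s : Finset ℚ} {p X Y : ℝ}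

theorem card_le_of_abs_mul_den_le (hp : 0 < p) (hX : 0 < X) (hY : 0 < Y)
    (hslope : ∀ q ∈ s, |(q.num : ℝ)| * Y ≤ X * q.den) (hden : ∀ q ∈ s, (q.den : ℝ) ≤ Y)
    (hsep : ∀ q ∈ s, ∀ q' ∈ s, q ≠ q' → p ≤ |(q.num : ℝ) * q'.den - q'.num * q.den|) :
    (#s : ℝ) ≤ 1 + 2 * X * Y / p := by
  have hpos (q : ℚ) : (0 : ℝ) < q.den := mod_cast q.den_pos
  have hcard := card_le_one_add_div_of_separated s (fun q => (q.num : ℝ) / q.den)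
    (L := X / Y) (δ := p / Y ^ 2) (by positivity) (by positivity)
    (fun q hq => by
      rw [abs_div, abs_of_pos (hpos q), div_le_div_iff₀ (hpos q) hY]
      exact hslope q hq)
    (fun q hq q' hq' hne => by
      rw [div_sub_div _ _ (hpos q).ne' (hpos q').ne', abs_div,
        abs_of_pos (mul_pos (hpos q) (hpos q')), mul_comm (q.den : ℝ) q'.num, sq]
      exact div_le_div₀ (abs_nonneg _) (hsep q hq q' hq' hne) (mul_pos (hpos q) (hpos q'))
        (mul_le_mul (hden q hq) (hden q' hq') (hpos q').le hY.le))
  exact hcard.trans_eq (by field_simp)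

theorem card_le_of_lt_abs_mul_den (hp : 0 < p) (hX : 0 < X) (hY : 0 < Y)
    (hslope : ∀ q ∈ s, X * q.den < |(q.num : ℝ)| * Y) (hnum : ∀ q ∈ s, |(q.num : ℝ)| ≤ X)
    (hsep : ∀ q ∈ s, ∀ q' ∈ s, q ≠ q' → p ≤ |(q.num : ℝ) * q'.den - q'.num * q.den|) :
    (#s : ℝ) ≤ 1 + 2 * X * Y / p := by
  have hpos (q : ℚ) : (0 : ℝ) < q.den := mod_cast q.den_pos
  have hnum_pos : ∀ q ∈ s, 0 < |(q.num : ℝ)| := fun q hq =>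
    pos_of_mul_pos_left ((mul_pos hX (hpos q)).trans (hslope q hq)) hY.le
  have hcard := card_le_one_add_div_of_separated s (fun q => (q.den : ℝ) / q.num)
    (L := Y / X) (δ := p / X ^ 2) (by positivity) (by positivity)
    (fun q hq => by
      rw [abs_div, abs_of_pos (hpos q), div_le_div_iff₀ (hnum_pos q hq) hX]
      linarith [hslope q hq])
    (fun q hq q' hq' hne => by
      have h := hnum_pos q hq
      have h' := hnum_pos q' hq'
      rw [div_sub_div _ _ (abs_pos.mp h) (abs_pos.mp h'), abs_div, abs_mul, sq, abs_sub_comm,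
        mul_comm (q.den : ℝ) q'.num]
      exact div_le_div₀ (abs_nonneg _) (hsep q hq q' hq' hne) (mul_pos h h')
        (mul_le_mul (hnum q hq) (hnum q' hq') h'.le hX.le))
  exact hcard.trans_eq (by field_simp)

theorem card_le_of_forall_dvd_num_mul_den_sub {p : ℕ} (hp : p ≠ 0) (hX : 0 < X) (hY : 0 < Y)
    (hnum : ∀ q ∈ s, |(q.num : ℝ)| ≤ X) (hden : ∀ q ∈ s, (q.den : ℝ) ≤ Y)
    (hdvd : ∀ q ∈ s, ∀ q' ∈ s, (p : ℤ) ∣ q.num * q'.den - q'.num * q.den) :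
    (#s : ℝ) ≤ 2 + 4 * X * Y / p := by
  have hp0 : (0 : ℝ) < p := mod_cast hp.pos
  have hsep : ∀ q ∈ s, ∀ q' ∈ s, q ≠ q' → (p : ℝ) ≤ |(q.num : ℝ) * q'.den - q'.num * q.den| := by
    intro q hq q' hq' hne
    have hne0 : q.num * q'.den - q'.num * q.den ≠ 0 :=
      sub_ne_zero.mpr fun h => hne (Rat.eq_iff_mul_eq_mul.mpr h)
    exact_mod_cast Int.le_of_dvd (abs_pos.mpr hne0) ((dvd_abs _ _).mpr (hdvd q hq q' hq'))
  have hflat := card_le_of_abs_mul_den_le (s := {q ∈ s | |(q.num : ℝ)| * Y ≤ X * q.den}) hp0 hX hY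
    (fun q hq => (mem_filter.mp hq).2) (fun q hq => hden q (mem_filter.mp hq).1)
    fun q hq q' hq' => hsep q (mem_filter.mp hq).1 q' (mem_filter.mp hq').1
  have hsteep := card_le_of_lt_abs_mul_den
    (s := {q ∈ s | ¬ |(q.num : ℝ)| * Y ≤ X * q.den}) hp0 hX hY
    (fun q hq => not_le.mp (mem_filter.mp hq).2) (fun q hq => hnum q (mem_filter.mp hq).1)
    fun q hq q' hq' => hsep q (mem_filter.mp hq).1 q' (mem_filter.mp hq').1
  calc (#s : ℝ) = (#{q ∈ s | |(q.num : ℝ)| * Y ≤ X * q.den} : ℝ) +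
        #{q ∈ s | ¬ |(q.num : ℝ)| * Y ≤ X * q.den} :=
        mod_cast (card_filter_add_card_filter_not _).symm
    _ ≤ (1 + 2 * X * Y / p) + (1 + 2 * X * Y / p) := add_le_add hflat hsteep
    _ = _ := by ring

theorem card_le_of_ratCast_eq {p : ℕ} [Fact p.Prime] (hX : 0 < X) (hY : 0 < Y) {c : ZMod p}
    (hnum : ∀ q ∈ s, |(q.num : ℝ)| ≤ X) (hden : ∀ q ∈ s, (q.den : ℝ) ≤ Y)
    (hden0 : ∀ q ∈ s, (q.den : ZMod p) ≠ 0) (hc : ∀ q ∈ s, (q : ZMod p) = c) :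
    (#s : ℝ) ≤ 2 + 4 * X * Y / p := by
  refine card_le_of_forall_dvd_num_mul_den_sub (Fact.out : p.Prime).ne_zero hX hY hnum hden
    fun q hq q' hq' => ?_
  have heq := (hc q hq).trans (hc q' hq').symm
  rw [Rat.cast_def, Rat.cast_def, div_eq_div_iff (hden0 q hq) (hden0 q' hq')] at heq
  rw [← ZMod.intCast_zmod_eq_zero_iff_dvd, Int.cast_sub, Int.cast_mul, Int.cast_mul,
    Int.cast_natCast, Int.cast_natCast, heq, sub_self]

end FiberCounting

section Energy

variable {X m₁ m₂ k u : ℕ} {d : ℤ}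

theorem mul_div_gcd_sub_div_gcd_eq (hm₁ : m₁ ≠ 0)
    (h : (X : ℤ) * (m₂ - m₁) = d * k * u * m₁ * m₂) :
    (X : ℤ) * ((m₂ / m₁.gcd m₂ : ℕ) - (m₁ / m₁.gcd m₂ : ℕ)) =
      d * k * u * (m₁.gcd m₂ : ℕ) * (m₁ / m₁.gcd m₂ : ℕ) * (m₂ / m₁.gcd m₂ : ℕ) := by
  have hg : ((m₁.gcd m₂ : ℕ) : ℤ) ≠ 0 := mod_cast Nat.gcd_ne_zero_left hm₁
  have h₁ : ((m₁.gcd m₂ : ℕ) : ℤ) * (m₁ / m₁.gcd m₂ : ℕ) = m₁ :=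
    mod_cast Nat.mul_div_cancel' (Nat.gcd_dvd_left m₁ m₂)
  have h₂ : ((m₁.gcd m₂ : ℕ) : ℤ) * (m₂ / m₁.gcd m₂ : ℕ) = m₂ :=
    mod_cast Nat.mul_div_cancel' (Nat.gcd_dvd_right m₁ m₂)
  refine mul_left_cancel₀ hg ?_
  nth_rw 1 [← h₁, ← h₂] at h
  rw [← h₁, ← h₂] at h
  linear_combination h

theorem div_gcd_dvd_of_mul_sub_eq (hm₁ : m₁ ≠ 0)
    (h : (X : ℤ) * (m₂ - m₁) = d * k * u * m₁ * m₂) :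
    m₁ / m₁.gcd m₂ ∣ X ∧ m₂ / m₁.gcd m₂ ∣ X := by
  have hred := mul_div_gcd_sub_div_gcd_eq hm₁ h
  have hcop := Nat.isCoprime_iff_coprime.mpr
    (Nat.coprime_div_gcd_div_gcd (Nat.gcd_pos_of_pos_left m₂ (Nat.pos_of_ne_zero hm₁)))
  constructor <;> rw [← Int.natCast_dvd_natCast]
  · refine (hcop.add_mul_left_right (-1)).dvd_of_dvd_mul_right ?_
    rw [mul_neg_one, ← sub_eq_add_neg, hred]
    exact (dvd_mul_left _ _).mul_right _
  · refine (hcop.symm.add_mul_left_right (-1)).dvd_of_dvd_mul_right ?_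
    rw [mul_neg_one, ← sub_eq_add_neg, ← neg_sub, mul_neg, hred]
    exact (dvd_mul_left _ _).neg_right

theorem dvd_mul_natAbs_of_mul_sub_eq (hm₁ : m₁ ≠ 0)
    (h : (X : ℤ) * (m₂ - m₁) = d * k * u * m₁ * m₂) :
    let Y := X * ((m₂ / m₁.gcd m₂ : ℕ) - (m₁ / m₁.gcd m₂ : ℕ) : ℤ).natAbs
    k ∣ Y ∧ u ∣ Y ∧ m₁.gcd m₂ ∣ Y := by
  intro Y
  have hY : Y = (d * k * u * (m₁.gcd m₂ : ℕ) * (m₁ / m₁.gcd m₂ : ℕ) *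
      (m₂ / m₁.gcd m₂ : ℕ) : ℤ).natAbs := by
    rw [← mul_div_gcd_sub_div_gcd_eq hm₁ h, Int.natAbs_mul, Int.natAbs_natCast]
  simp only [Int.natAbs_mul, Int.natAbs_natCast] at hY
  refine ⟨Dvd.intro (d.natAbs * u * m₁.gcd m₂ * (m₁ / m₁.gcd m₂) * (m₂ / m₁.gcd m₂)) ?_,
    Dvd.intro (d.natAbs * k * m₁.gcd m₂ * (m₁ / m₁.gcd m₂) * (m₂ / m₁.gcd m₂)) ?_,
    Dvd.intro (d.natAbs * k * u * (m₁ / m₁.gcd m₂) * (m₂ / m₁.gcd m₂)) ?_⟩ <;>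
  · rw [hY]
    ring

variable {T : Finset ((ℕ × ℕ) × ℕ × ℕ)}

theorem card_filter_div_gcd_eq_le
    (hT : ∀ x ∈ T, x.1.1 ≠ 0 ∧
      ∃ d : ℤ, (X : ℤ) * (x.1.2 - x.1.1) = d * x.2.1 * x.2.2 * x.1.1 * x.1.2)
    (y : ℕ × ℕ) (hy : X * ((y.2 : ℤ) - y.1).natAbs ≠ 0) :
    #{x ∈ T | (x.1.1 / x.1.1.gcd x.1.2, x.1.2 / x.1.1.gcd x.1.2) = y} ≤
      #(X * ((y.2 : ℤ) - y.1).natAbs).divisors ^ 3 := by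
  set Y := X * ((y.2 : ℤ) - y.1).natAbs with hY
  have hcard : #(Y.divisors ×ˢ Y.divisors ×ˢ Y.divisors) = #Y.divisors ^ 3 := by
    rw [card_product, card_product]
    ring
  rw [← hcard]
  refine card_le_card_of_injOn (fun x => (x.2.1, x.2.2, x.1.1.gcd x.1.2)) ?_ ?_
  · intro x hx
    obtain ⟨hxT, rfl⟩ := mem_filter.mp hx
    obtain ⟨hm, d, hd⟩ := hT x hxT
    obtain ⟨hk, hu, hg⟩ := dvd_mul_natAbs_of_mul_sub_eq hm hd
    simp only [coe_product, Set.mem_prod, mem_coe, Nat.mem_divisors]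
    exact ⟨⟨hk, hy⟩, ⟨hu, hy⟩, hg, hy⟩
  · rintro ⟨⟨m₁, m₂⟩, k, u⟩ hx ⟨⟨m₁', m₂'⟩, k', u'⟩ hx' heq
    have hfiber := (mem_filter.mp hx).2.trans (mem_filter.mp hx').2.symm
    simp only [Prod.mk.injEq] at hfiber heq ⊢
    obtain ⟨rfl, rfl, hg⟩ := heq
    refine ⟨⟨?_, ?_⟩, rfl, rfl⟩
    · rw [← Nat.mul_div_cancel' (Nat.gcd_dvd_left m₁ m₂), hfiber.1, hg,
        Nat.mul_div_cancel' (Nat.gcd_dvd_left m₁' m₂')]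
    · rw [← Nat.mul_div_cancel' (Nat.gcd_dvd_right m₁ m₂), hfiber.2, hg,
        Nat.mul_div_cancel' (Nat.gcd_dvd_right m₁' m₂')]

theorem card_le_pow_five_of_mul_sub_eq {M B D : ℕ} (hX : X ≠ 0) (hXB : X * M ≤ B)
    (hD : ∀ n ≠ 0, n ≤ B → #n.divisors ≤ D)
    (hT : ∀ x ∈ T, x.1 ∈ (Icc 1 M).offDiag ∧
      ∃ d : ℤ, (X : ℤ) * (x.1.2 - x.1.1) = d * x.2.1 * x.2.2 * x.1.1 * x.1.2) :
    #T ≤ D ^ 5 := by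
  classical
  have hm : ∀ x ∈ T, x.1.1 ≠ 0 ∧ x.1.1 ≤ M ∧ x.1.2 ≤ M ∧ x.1.1 ≠ x.1.2 := by
    intro x hx
    have := (hT x hx).1
    simp only [mem_offDiag, mem_Icc] at this
    omega
  set f : (ℕ × ℕ) × ℕ × ℕ → ℕ × ℕ :=
    fun x => (x.1.1 / x.1.1.gcd x.1.2, x.1.2 / x.1.1.gcd x.1.2)
  have hfiber : ∀ y ∈ T.image f, #{x ∈ T | f x = y} ≤ D ^ 3 := by
    intro y hy
    obtain ⟨x, hx, rfl⟩ := mem_image.mp hy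
    obtain ⟨-, hm₁M, hm₂M, hne⟩ := hm x hx
    have hsub : ((f x).2 : ℤ) - (f x).1 ≠ 0 := by
      rw [sub_ne_zero]
      exact fun h => hne ((Nat.div_left_inj (Nat.gcd_dvd_right _ _) (Nat.gcd_dvd_left _ _)).mp
        (Nat.cast_injective h)).symm
    have hle : (((f x).2 : ℤ) - (f x).1).natAbs ≤ M := by
      have h₁ : (f x).1 ≤ M := (Nat.div_le_self _ _).trans hm₁M
      have h₂ : (f x).2 ≤ M := (Nat.div_le_self _ _).trans hm₂M
      omega
    have hne0 := mul_ne_zero hX (Int.natAbs_ne_zero.mpr hsub)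
    refine (card_filter_div_gcd_eq_le (fun x hx => ⟨(hm x hx).1, (hT x hx).2⟩) _ hne0).trans ?_
    exact Nat.pow_le_pow_left (hD _ hne0 ((Nat.mul_le_mul_left X hle).trans hXB)) 3
  have himage : #(T.image f) ≤ D ^ 2 := by
    obtain rfl | ⟨x₀, hx₀⟩ := T.eq_empty_or_nonempty
    · exact Nat.zero_le _
    have hsub : T.image f ⊆ X.divisors ×ˢ X.divisors := by
      intro y hy
      obtain ⟨x, hx, rfl⟩ := mem_image.mp hy
      obtain ⟨-, d, hd⟩ := hT x hx
      obtain ⟨h₁, h₂⟩ := div_gcd_dvd_of_mul_sub_eq (hm x hx).1 hd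
      exact mem_product.mpr ⟨Nat.mem_divisors.mpr ⟨h₁, hX⟩, Nat.mem_divisors.mpr ⟨h₂, hX⟩⟩
    have hM : 0 < M := (Nat.pos_of_ne_zero (hm x₀ hx₀).1).trans_le (hm x₀ hx₀).2.1
    have hXD := hD X hX ((Nat.le_mul_of_pos_right X hM).trans hXB)
    refine (card_le_card hsub).trans ?_
    rw [card_product, sq]
    exact Nat.mul_le_mul hXD hXD
  calc #T ≤ D ^ 3 * #(T.image f) := card_le_mul_card_image T _ hfiber
    _ ≤ D ^ 3 * D ^ 2 := by gcongr
    _ = D ^ 5 := by ring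

/-- The parameters `((k, u, n), (m₁, m₂))` of the amplified second moment; `m₁` and `m₂` are the two
variables produced by squaring out the sum over `m`. -/
abbrev ShiftParam : Type := (ℕ × ℕ × ℤ) × ℕ × ℕ

/-- The range of parameters over which the off-diagonal part (`m₁ ≠ m₂`) of the amplified second
moment is summed. -/
def shiftParams (K M U : ℕ) (I : Finset ℤ) : Finset ShiftParam :=
  (Icc 1 K ×ˢ Icc 1 U ×ˢ I) ×ˢ (Icc 1 M).offDiag

/-- The fraction `(a k + b m n) / (m u)` attached to `w = (k, u, n)`. Reduced modulo `p` and divided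
by `b` it is the point around which `χ` is sampled after the shift `n ↦ n + u v`. -/
def shiftFraction (a b : ℤ) (w : ℕ × ℕ × ℤ) (m : ℕ) : ℚ :=
  Rat.divInt (a * w.1 + b * m * w.2.2) (m * w.2.1 : ℕ)

/-- The pair of fractions attached to `((k, u, n), (m₁, m₂))`. -/
def shiftFractionPair (a b : ℤ) (s : ShiftParam) : ℚ × ℚ :=
  (shiftFraction a b s.1 s.2.1, shiftFraction a b s.1 s.2.2)

theorem mem_shiftParams {K M U : ℕ} {I : Finset ℤ} {s : ShiftParam} :
    s ∈ shiftParams K M U I ↔ (s.1.1 ∈ Icc 1 K ∧ s.1.2.1 ∈ Icc 1 U ∧ s.1.2.2 ∈ I) ∧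
      s.2 ∈ (Icc 1 M).offDiag := by
  simp only [shiftParams, mem_product]

theorem card_shiftParams_le (K M U : ℕ) (I : Finset ℤ) :
    #(shiftParams K M U I) ≤ K * U * #I * M ^ 2 := by
  simp only [shiftParams, card_product, offDiag_card, Nat.card_Icc, Nat.add_sub_cancel, mul_assoc]
  gcongr
  exact (Nat.sub_le _ _).trans_eq (sq M).symm

variable {a b : ℤ}

theorem shiftFraction_sub_shiftFraction {w : ℕ × ℕ × ℤ} (hu : w.2.1 ≠ 0) (hm₁ : m₁ ≠ 0)
    (hm₂ : m₂ ≠ 0) :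
    shiftFraction a b w m₁ - shiftFraction a b w m₂ =
      a * w.1 * (m₂ - m₁) / (m₁ * m₂ * w.2.1) := by
  simp only [shiftFraction, Rat.divInt_eq_div]
  push_cast
  field_simp
  ring

theorem mul_sub_eq_of_shiftFractionPair_eq (ha : a ≠ 0) {s s' : ShiftParam}
    (hu : s.1.2.1 ≠ 0) (hm₁ : s.2.1 ≠ 0) (hm₂ : s.2.2 ≠ 0)
    (hu' : s'.1.2.1 ≠ 0) (hm₁' : s'.2.1 ≠ 0) (hm₂' : s'.2.2 ≠ 0)
    (h : shiftFractionPair a b s = shiftFractionPair a b s') :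
    ((s.1.1 * s'.1.2.1 * s'.2.1 * s'.2.2 : ℕ) : ℤ) * (s.2.2 - s.2.1) =
      (s'.2.2 - s'.2.1 : ℤ) * s'.1.1 * s.1.2.1 * s.2.1 * s.2.2 := by
  have hsub : shiftFraction a b s.1 s.2.1 - shiftFraction a b s.1 s.2.2 =
      shiftFraction a b s'.1 s'.2.1 - shiftFraction a b s'.1 s'.2.2 :=
    congrArg (fun x => x.1 - x.2) h
  rw [shiftFraction_sub_shiftFraction hu hm₁ hm₂, shiftFraction_sub_shiftFraction hu' hm₁' hm₂',
    div_eq_div_iff (by positivity) (by positivity)] at hsub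
  have hQ : (s.1.1 * s'.1.2.1 * s'.2.1 * s'.2.2 : ℚ) * (s.2.2 - s.2.1) =
      (s'.2.2 - s'.2.1) * s'.1.1 * s.1.2.1 * s.2.1 * s.2.2 := by
    refine mul_left_cancel₀ (Int.cast_ne_zero.mpr ha) ?_
    linear_combination hsub
  push_cast
  exact_mod_cast hQ

theorem eq_of_shiftFraction_eq (hb : b ≠ 0) {k u m : ℕ} {n n' : ℤ} (hu : u ≠ 0) (hm : m ≠ 0)
    (h : shiftFraction a b (k, u, n) m = shiftFraction a b (k, u, n') m) : n = n' := by
  rw [shiftFraction, shiftFraction, Rat.divInt_eq_divInt_iff (by positivity) (by positivity)] at h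
  have hmu : ((m * u : ℕ) : ℤ) ≠ 0 := by positivity
  have hbm : b * m ≠ 0 := mul_ne_zero hb (by positivity)
  exact mul_left_cancel₀ hbm (add_left_cancel (mul_right_cancel₀ hmu h))

theorem ne_zero_and_le_of_mem_shiftParams {K M U : ℕ} {I : Finset ℤ} {s : ShiftParam}
    (hs : s ∈ shiftParams K M U I) :
    (s.1.1 ≠ 0 ∧ s.1.1 ≤ K) ∧ (s.1.2.1 ≠ 0 ∧ s.1.2.1 ≤ U) ∧ (s.2.1 ≠ 0 ∧ s.2.1 ≤ M) ∧
      s.2.2 ≠ 0 ∧ s.2.2 ≤ M := by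
  have := mem_shiftParams.mp hs
  simp only [mem_offDiag, mem_Icc] at this
  omega

theorem card_le_pow_five_of_shiftFractionPair_eq (ha : a ≠ 0) (hb : b ≠ 0) {K M U B D : ℕ}
    {I : Finset ℤ} (hB : K * U * M ^ 3 ≤ B) (hD : ∀ n ≠ 0, n ≤ B → #n.divisors ≤ D)
    {T : Finset (ShiftParam × ShiftParam)} {t : ShiftParam}
    (ht : t ∈ shiftParams K M U I)
    (hT : ∀ x ∈ T, x.1 ∈ shiftParams K M U I ∧
      shiftFractionPair a b x.1 = shiftFractionPair a b x.2 ∧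
      ((x.1.1.1, x.2.1.2.1, x.1.1.2.2), x.2.2) = t) :
    #T ≤ D ^ 5 := by
  classical
  obtain ⟨⟨k, u', n⟩, m₁', m₂'⟩ := t
  obtain ⟨⟨hk, hkK⟩, ⟨hu', huU'⟩, ⟨hm₁', hmM₁'⟩, hm₂', hmM₂'⟩ :=
    ne_zero_and_le_of_mem_shiftParams ht
  have hinj : Set.InjOn (fun x : ShiftParam × ShiftParam =>
      (x.1.2, x.2.1.1, x.1.1.2.1)) T := by
    rintro ⟨⟨⟨k₁, u₁, n₁⟩, m₁, m₂⟩, ⟨k₁', u₁', n₁'⟩, l₁, l₂⟩ hx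
      ⟨⟨⟨k₂, u₂, n₂⟩, m₃, m₄⟩, ⟨k₂', u₂', n₂'⟩, l₃, l₄⟩ hy hxy
    obtain ⟨-, hx, hxt⟩ := hT _ hx
    obtain ⟨-, hy, hyt⟩ := hT _ hy
    simp only [Prod.mk.injEq] at hxt hyt hxy
    obtain ⟨⟨rfl, rfl, rfl⟩, rfl, rfl⟩ := hxt
    obtain ⟨⟨rfl, rfl, rfl⟩, rfl, rfl⟩ := hyt
    obtain ⟨⟨rfl, rfl⟩, rfl, rfl⟩ := hxy
    rw [eq_of_shiftFraction_eq hb hu' hm₁' (congrArg Prod.fst (hx.symm.trans hy))]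
  rw [← card_image_of_injOn hinj]
  refine card_le_pow_five_of_mul_sub_eq (X := k * u' * m₁' * m₂') (M := M) (by positivity) ?_ hD ?_
  · calc k * u' * m₁' * m₂' * M ≤ K * U * M * M * M := by gcongr
      _ = K * U * M ^ 3 := by ring
      _ ≤ B := hB
  · intro y hy
    obtain ⟨x, hx, rfl⟩ := mem_image.mp hy
    obtain ⟨hs, hpair, hxt⟩ := hT x hx
    obtain ⟨-, ⟨hu, -⟩, ⟨hm₁, -⟩, hm₂, -⟩ := ne_zero_and_le_of_mem_shiftParams hs
    simp only [Prod.ext_iff] at hxt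
    obtain ⟨⟨rfl, rfl, rfl⟩, rfl, rfl⟩ := hxt
    exact ⟨(mem_shiftParams.mp hs).2, _,
      mul_sub_eq_of_shiftFractionPair_eq ha hu hm₁ hm₂ hu' hm₁' hm₂' hpair⟩

theorem card_filter_shiftFractionPair_eq_le (ha : a ≠ 0) (hb : b ≠ 0) {K M U B D : ℕ}
    {I : Finset ℤ} (hB : K * U * M ^ 3 ≤ B) (hD : ∀ n ≠ 0, n ≤ B → #n.divisors ≤ D) :
    #{ss ∈ shiftParams K M U I ×ˢ shiftParams K M U I |
      shiftFractionPair a b ss.1 = shiftFractionPair a b ss.2} ≤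
      D ^ 5 * #(shiftParams K M U I) := by
  refine card_le_mul_card_image_of_maps_to
    (f := fun ss => ((ss.1.1.1, ss.2.1.2.1, ss.1.1.2.2), ss.2.2)) ?_ _ fun t ht => ?_
  · intro ss hss
    obtain ⟨h₁, h₂⟩ := mem_product.mp (mem_filter.mp hss).1
    rw [mem_shiftParams] at h₁ h₂ ⊢
    exact ⟨⟨h₁.1.1, h₂.1.2.1, h₁.1.2.2⟩, h₂.2⟩
  · refine card_le_pow_five_of_shiftFractionPair_eq ha hb hB hD ht fun ss hss => ?_
    obtain ⟨hss, htt⟩ := mem_filter.mp hss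
    obtain ⟨hmem, heq⟩ := mem_filter.mp hss
    exact ⟨(mem_product.mp hmem).1, heq, htt⟩

end Energy

section Holder

theorem card_filter_comp_eq_sum {σ κ τ : Type*} [DecidableEq κ] [DecidableEq τ] (S : Finset σ)
    (ρ : σ → κ) (π : κ → τ) (t : τ) :
    #{s ∈ S | π (ρ s) = t} = ∑ q ∈ S.image ρ with π q = t, #{s ∈ S | ρ s = q} := by
  rw [card_eq_sum_card_fiberwise (f := ρ) (t := {q ∈ S.image ρ | π q = t})]
  · refine sum_congr rfl fun q hq => ?_
    rw [filter_filter]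
    congr 1
    refine filter_congr fun s _ => and_iff_right_of_imp ?_
    rintro rfl
    exact (mem_filter.mp hq).2
  · intro s hs
    obtain ⟨hs, ht⟩ := mem_filter.mp hs
    exact mem_filter.mpr ⟨mem_image_of_mem ρ hs, ht⟩

theorem card_filter_apply_eq_apply {σ κ : Type*} [DecidableEq κ] (S : Finset σ) (ρ : σ → κ) :
    #{ss ∈ S ×ˢ S | ρ ss.1 = ρ ss.2} = ∑ q ∈ S.image ρ, #{s ∈ S | ρ s = q} ^ 2 := by
  rw [card_eq_sum_card_fiberwise (f := fun ss => ρ ss.1) (t := S.image ρ)]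
  · refine sum_congr rfl fun q _ => ?_
    rw [sq, ← card_product, ← filter_product, filter_filter]
    congr 1
    refine filter_congr fun ss _ => ?_
    constructor
    · rintro ⟨h, rfl⟩
      exact ⟨rfl, h.symm⟩
    · rintro ⟨h₁, h₂⟩
      exact ⟨h₁.trans h₂.symm, h₁⟩
  · intro ss hss
    exact mem_image_of_mem ρ (mem_product.mp (mem_filter.mp hss).1).1

theorem sum_sq_card_filter_comp_le {σ κ τ : Type*} [DecidableEq κ] [Fintype τ] [DecidableEq τ]
    (S : Finset σ) (ρ : σ → κ) (π : κ → τ) {H : ℝ}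
    (hH : ∀ t, (#{q ∈ S.image ρ | π q = t} : ℝ) ≤ H) :
    ∑ t, (#{s ∈ S | π (ρ s) = t} : ℝ) ^ 2 ≤ H * #{ss ∈ S ×ˢ S | ρ ss.1 = ρ ss.2} := by
  calc ∑ t, (#{s ∈ S | π (ρ s) = t} : ℝ) ^ 2
      ≤ ∑ t, H * ∑ q ∈ S.image ρ with π q = t, (#{s ∈ S | ρ s = q} : ℝ) ^ 2 := by
        refine sum_le_sum fun t _ => ?_
        rw [card_filter_comp_eq_sum, Nat.cast_sum]
        exact sq_sum_le_card_mul_sum_sq.trans (mul_le_mul_of_nonneg_right (hH t) (by positivity))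
    _ = H * #{ss ∈ S ×ˢ S | ρ ss.1 = ρ ss.2} := by
        rw [← mul_sum, sum_fiberwise, card_filter_apply_eq_apply]
        push_cast
        rfl

theorem sum_pow_two_mul_le {σ τ : Type*} [Fintype τ] [DecidableEq τ] (S : Finset σ) (f : σ → τ)
    {Z : τ → ℝ} (hZ : ∀ t, 0 ≤ Z t) {r : ℕ} (hr : r ≠ 0) :
    (∑ s ∈ S, Z (f s)) ^ (2 * r) ≤
      (#S : ℝ) ^ (2 * r - 2) * (∑ t, (#{s ∈ S | f s = t} : ℝ) ^ 2) * ∑ t, Z t ^ (2 * r) := by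
  obtain ⟨k, rfl⟩ := Nat.exists_eq_succ_of_ne_zero hr
  have hfiber : ∑ s ∈ S, Z (f s) ^ (k + 1) = ∑ t, (#{s ∈ S | f s = t} : ℝ) * Z t ^ (k + 1) := by
    rw [← sum_fiberwise S f]
    refine sum_congr rfl fun t _ => ?_
    rw [sum_congr rfl fun s hs => by rw [(mem_filter.mp hs).2], sum_const, nsmul_eq_mul]
  have hsum : 0 ≤ ∑ s ∈ S, Z (f s) := sum_nonneg fun s _ => hZ _
  calc (∑ s ∈ S, Z (f s)) ^ (2 * (k + 1)) = ((∑ s ∈ S, Z (f s)) ^ (k + 1)) ^ 2 := by ring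
    _ ≤ ((#S : ℝ) ^ k * ∑ s ∈ S, Z (f s) ^ (k + 1)) ^ 2 := by
        gcongr
        exact pow_sum_le_card_mul_sum_pow (fun s _ => hZ _) k
    _ = (#S : ℝ) ^ (2 * (k + 1) - 2) * (∑ t, (#{s ∈ S | f s = t} : ℝ) * Z t ^ (k + 1)) ^ 2 := by
        rw [hfiber, mul_pow, ← pow_mul, mul_comm k 2]
        rfl
    _ ≤ (#S : ℝ) ^ (2 * (k + 1) - 2) *
          ((∑ t, (#{s ∈ S | f s = t} : ℝ) ^ 2) * ∑ t, (Z t ^ (k + 1)) ^ 2) := by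
        gcongr
        exact sum_mul_sq_le_sq_mul_sq univ _ _
    _ = _ := by
        simp only [← pow_mul, mul_comm (k + 1) 2, mul_assoc]

end Holder

section OffDiagonal

open scoped ComplexConjugate

theorem abs_num_divInt_le (a : ℤ) {b : ℤ} (hb : b ≠ 0) : |(Rat.divInt a b).num| ≤ |a| := by
  obtain rfl | ha := eq_or_ne a 0
  · simp only [Rat.zero_divInt, Rat.num_zero, le_refl]
  · exact Int.le_of_dvd (abs_pos.mpr ha) ((abs_dvd_abs _ _).mpr (Rat.num_dvd a hb))

theorem natCast_zmod_ne_zero_of_lt {p m : ℕ} (hm : m ≠ 0) (hmp : m < p) : (m : ZMod p) ≠ 0 := by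
  rw [Ne, ZMod.natCast_eq_zero_iff]
  exact Nat.not_dvd_of_pos_of_lt (Nat.pos_of_ne_zero hm) hmp

variable {a b : ℤ} {w : ℕ × ℕ × ℤ} {m : ℕ}

theorem abs_num_shiftFraction_le (hm : m ≠ 0) (hu : w.2.1 ≠ 0) :
    |(shiftFraction a b w m).num| ≤ |a * w.1 + b * m * w.2.2| :=
  abs_num_divInt_le _ (by positivity)

theorem den_shiftFraction_dvd : (shiftFraction a b w m).den ∣ m * w.2.1 := by
  exact_mod_cast Rat.den_dvd (a * w.1 + b * m * w.2.2) ((m * w.2.1 : ℕ) : ℤ)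

variable {p : ℕ} [Fact p.Prime]

theorem den_shiftFraction_ne_zero (hm : m ≠ 0) (hmp : m < p) (hu : w.2.1 ≠ 0) (hup : w.2.1 < p) :
    ((shiftFraction a b w m).den : ZMod p) ≠ 0 := by
  intro h
  refine mul_ne_zero (natCast_zmod_ne_zero_of_lt hm hmp) (natCast_zmod_ne_zero_of_lt hu hup) ?_
  rw [ZMod.natCast_eq_zero_iff] at h
  rw [← Nat.cast_mul, ZMod.natCast_eq_zero_iff]
  exact h.trans den_shiftFraction_dvd

theorem mul_shiftFraction_div (hb : (b : ZMod p) ≠ 0) (hm : m ≠ 0) (hmp : m < p)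
    (hu : w.2.1 ≠ 0) (hup : w.2.1 < p) :
    (b * m * w.2.1 : ZMod p) * ((shiftFraction a b w m : ZMod p) / b) =
      a * w.1 + b * m * w.2.2 := by
  have hm0 := natCast_zmod_ne_zero_of_lt hm hmp
  have hu0 := natCast_zmod_ne_zero_of_lt hu hup
  have hmu : (((m * w.2.1 : ℕ) : ℤ) : ZMod p) ≠ 0 := by
    push_cast
    exact mul_ne_zero hm0 hu0
  rw [shiftFraction, Rat.cast_divInt_of_ne_zero _ hmu]
  push_cast
  field_simp

/-- The pair of residues `q / b` modulo `p` at which the correlation of `χ` is sampled. -/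
def samplePoint (p : ℕ) [Fact p.Prime] (b : ℤ) (q : ℚ × ℚ) : ZMod p × ZMod p :=
  (q.1 / b, q.2 / b)

/-- The correlation `|∑ χ(t₁ + v) conj χ(t₂ + v)|` over the shifts `1 ≤ v ≤ V`. -/
noncomputable def shiftCorrelation {R : Type*} [CommRing R] (χ : MulChar R ℂ) (V : ℕ)
    (t : R × R) : ℝ :=
  ‖∑ v : Fin V, χ (t.1 + (v + 1 : ℕ)) * conj (χ (t.2 + (v + 1 : ℕ)))‖

theorem sum_shiftCorrelation_pow_le {χ : MulChar (ZMod p) ℂ} (hχ : χ ≠ 1) {r : ℕ} (hr : r ≠ 0)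
    {V : ℕ} (hV : V ^ r ≤ p) :
    ∑ t, shiftCorrelation χ V t ^ (2 * r) ≤ ((r : ℝ) ^ (2 * r) + 4 * r ^ 2) * (p : ℝ) ^ 3 := by
  have hVp : V ≤ p := (Nat.le_self_pow hr V).trans hV
  have hinj : Function.Injective fun v : Fin V => ((v + 1 : ℕ) : ZMod p) := by
    intro v w h
    refine Fin.ext ?_
    simp only [Nat.cast_add, add_left_inj] at h
    rwa [ZMod.natCast_eq_natCast_iff', Nat.mod_eq_of_lt (v.2.trans_le hVp),
      Nat.mod_eq_of_lt (w.2.trans_le hVp)] at h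
  have h := sum_sum_norm_sum_mulChar_mul_conj_pow_le hχ hr hinj
    (by rwa [Fintype.card_fin, ZMod.card])
  rwa [ZMod.card, ← Fintype.sum_prod_type'] at h

variable {K M U : ℕ} {I : Finset ℤ} {X Y : ℝ}

theorem card_le_of_shiftFraction_div_eq (hb : (b : ZMod p) ≠ 0) (hM : M < p) (hU : U < p)
    (hX : 0 < X) (hY : 0 < Y) (hMU : (M * U : ℝ) ≤ Y)
    (hnum : ∀ k ∈ Icc 1 K, ∀ m ∈ Icc 1 M, ∀ n ∈ I, |(a * k + b * m * n : ℝ)| ≤ X)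
    {s : Finset ℚ} {c : ZMod p} (hc : ∀ q ∈ s, (q : ZMod p) / b = c)
    (hs : ∀ q ∈ s, ∃ k ∈ Icc 1 K, ∃ m ∈ Icc 1 M, ∃ u ∈ Icc 1 U, ∃ n ∈ I,
      shiftFraction a b (k, u, n) m = q) :
    (#s : ℝ) ≤ 2 + 4 * X * Y / p := by
  refine card_le_of_ratCast_eq hX hY (c := c * b) ?_ ?_ ?_ fun q hq =>
    (div_eq_iff hb).mp (hc q hq)
  all_goals
    intro q hq
    obtain ⟨k, hk, m, hm, u, hu, n, hn, rfl⟩ := hs q hq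
    obtain ⟨hm0, hmM⟩ := mem_Icc.mp hm
    obtain ⟨hu0, huU⟩ := mem_Icc.mp hu
  · refine le_trans ?_ (hnum k hk m hm n hn)
    exact_mod_cast abs_num_shiftFraction_le (w := (k, u, n)) (Nat.ne_of_gt hm0) (Nat.ne_of_gt hu0)
  · refine le_trans ?_ hMU
    exact_mod_cast (Nat.le_of_dvd (Nat.mul_pos hm0 hu0) den_shiftFraction_dvd).trans
      (Nat.mul_le_mul hmM huU)
  · exact den_shiftFraction_ne_zero (Nat.ne_of_gt hm0) (hmM.trans_lt hM) (Nat.ne_of_gt hu0)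
      (huU.trans_lt hU)

theorem card_filter_samplePoint_eq_le (hb : (b : ZMod p) ≠ 0) (hM : M < p) (hU : U < p)
    (hX : 0 < X) (hY : 0 < Y) (hMU : (M * U : ℝ) ≤ Y)
    (hnum : ∀ k ∈ Icc 1 K, ∀ m ∈ Icc 1 M, ∀ n ∈ I, |(a * k + b * m * n : ℝ)| ≤ X)
    (t : ZMod p × ZMod p) :
    (#{q ∈ (shiftParams K M U I).image (shiftFractionPair a b) | samplePoint p b q = t} : ℝ) ≤
      (2 + 4 * X * Y / p) ^ 2 := by
  set Q := {q ∈ (shiftParams K M U I).image (shiftFractionPair a b) | samplePoint p b q = t}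
  have hmem : ∀ q ∈ Q, samplePoint p b q = t ∧ ∃ k ∈ Icc 1 K, ∃ u ∈ Icc 1 U, ∃ n ∈ I,
      ∃ m₁ ∈ Icc 1 M, ∃ m₂ ∈ Icc 1 M,
        (shiftFraction a b (k, u, n) m₁, shiftFraction a b (k, u, n) m₂) = q := by
    intro q hq
    obtain ⟨hq, hqt⟩ := mem_filter.mp hq
    obtain ⟨⟨⟨k, u, n⟩, m₁, m₂⟩, hs, rfl⟩ := mem_image.mp hq
    obtain ⟨⟨hk, hu, hn⟩, hm⟩ := mem_shiftParams.mp hs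
    obtain ⟨hm₁, hm₂, -⟩ := mem_offDiag.mp hm
    exact ⟨hqt, k, hk, u, hu, n, hn, m₁, hm₁, m₂, hm₂, rfl⟩
  clear_value Q
  have hfst : (#(Q.image Prod.fst) : ℝ) ≤ 2 + 4 * X * Y / p := by
    refine card_le_of_shiftFraction_div_eq (c := t.1) hb hM hU hX hY hMU hnum
      (forall_mem_image.mpr fun q hq => congrArg Prod.fst (hmem q hq).1)
      (forall_mem_image.mpr fun q hq => ?_)
    obtain ⟨-, k, hk, u, hu, n, hn, m₁, hm₁, -, -, rfl⟩ := hmem q hq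
    exact ⟨k, hk, m₁, hm₁, u, hu, n, hn, rfl⟩
  have hsnd : (#(Q.image Prod.snd) : ℝ) ≤ 2 + 4 * X * Y / p := by
    refine card_le_of_shiftFraction_div_eq (c := t.2) hb hM hU hX hY hMU hnum
      (forall_mem_image.mpr fun q hq => congrArg Prod.snd (hmem q hq).1)
      (forall_mem_image.mpr fun q hq => ?_)
    obtain ⟨-, k, hk, u, hu, n, hn, -, -, m₂, hm₂, rfl⟩ := hmem q hq
    exact ⟨k, hk, m₂, hm₂, u, hu, n, hn, rfl⟩
  have hsub : Q ⊆ Q.image Prod.fst ×ˢ Q.image Prod.snd := fun q hq =>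
    mem_product.mpr ⟨mem_image_of_mem _ hq, mem_image_of_mem _ hq⟩
  calc (#Q : ℝ) ≤ #(Q.image Prod.fst) * #(Q.image Prod.snd) := by
        exact_mod_cast (card_le_card hsub).trans_eq (card_product _ _)
    _ ≤ (2 + 4 * X * Y / p) ^ 2 := by
        rw [sq]
        gcongr

theorem sum_shiftCorrelation_samplePoint_pow_le {χ : MulChar (ZMod p) ℂ} (hχ : χ ≠ 1) {r : ℕ}
    (hr : r ≠ 0) (ha : a ≠ 0) (hb : (b : ZMod p) ≠ 0) {V B D : ℕ} (hM : M < p) (hU : U < p)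
    (hV : V ^ r ≤ p) (hB : K * U * M ^ 3 ≤ B) (hD : ∀ n ≠ 0, n ≤ B → #n.divisors ≤ D)
    (hX : 0 < X) (hY : 0 < Y) (hMU : (M * U : ℝ) ≤ Y)
    (hnum : ∀ k ∈ Icc 1 K, ∀ m ∈ Icc 1 M, ∀ n ∈ I, |(a * k + b * m * n : ℝ)| ≤ X) :
    (∑ s ∈ shiftParams K M U I,
        shiftCorrelation χ V (samplePoint p b (shiftFractionPair a b s))) ^ (2 * r) ≤
      (K * U * #I * M ^ 2 : ℝ) ^ (2 * r - 1) * (2 + 4 * X * Y / p) ^ 2 * D ^ 5 *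
        (((r : ℝ) ^ (2 * r) + 4 * r ^ 2) * p ^ 3) := by
  classical
  set S := shiftParams K M U I
  have hb0 : b ≠ 0 := by
    rintro rfl
    exact hb Int.cast_zero
  have hS : (#S : ℝ) ≤ K * U * #I * M ^ 2 := mod_cast card_shiftParams_le K M U I
  have henergy : (#{ss ∈ S ×ˢ S | shiftFractionPair a b ss.1 = shiftFractionPair a b ss.2} : ℝ) ≤
      D ^ 5 * #S := mod_cast card_filter_shiftFractionPair_eq_le ha hb0 hB hD
  have hcount := sum_sq_card_filter_comp_le S (shiftFractionPair a b) (samplePoint p b)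
    (card_filter_samplePoint_eq_le hb hM hU hX hY hMU hnum)
  have hmoment := sum_shiftCorrelation_pow_le hχ hr hV
  have hnonneg : ∀ t, 0 ≤ shiftCorrelation χ V t := fun t => norm_nonneg _
  calc _ ≤ (#S : ℝ) ^ (2 * r - 2) *
        (∑ t, (#{s ∈ S | samplePoint p b (shiftFractionPair a b s) = t} : ℝ) ^ 2) *
          ∑ t, shiftCorrelation χ V t ^ (2 * r) :=
        sum_pow_two_mul_le S (fun s => samplePoint p b (shiftFractionPair a b s)) hnonneg hr
    _ ≤ (#S : ℝ) ^ (2 * r - 2) * ((2 + 4 * X * Y / p) ^ 2 * (D ^ 5 * #S)) *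
          (((r : ℝ) ^ (2 * r) + 4 * r ^ 2) * p ^ 3) := by
        gcongr
        · exact sum_nonneg fun t _ => pow_nonneg (hnonneg t) _
        · exact hcount.trans (by gcongr)
    _ = (#S : ℝ) ^ (2 * r - 2 + 1) * (2 + 4 * X * Y / p) ^ 2 * D ^ 5 *
          (((r : ℝ) ^ (2 * r) + 4 * r ^ 2) * p ^ 3) := by ring
    _ ≤ _ := by
        rw [show 2 * r - 2 + 1 = 2 * r - 1 by omega]
        gcongr

end OffDiagonal

section Amplification

open scoped ComplexConjugate

theorem sum_norm_sum_mul_sq_le {ι κ : Type*} (s : Finset ι) (t : Finset κ) {c : ι → ℂ}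
    (hc : ∀ i ∈ s, ‖c i‖ ≤ 1) (g : ι → κ → ℂ) :
    ∑ j ∈ t, ‖∑ i ∈ s, c i * g i j‖ ^ 2 ≤
      ∑ x ∈ s ×ˢ s, ‖∑ j ∈ t, g x.1 j * conj (g x.2 j)‖ := by
  have hexpand : ((∑ j ∈ t, ‖∑ i ∈ s, c i * g i j‖ ^ 2 : ℝ) : ℂ) =
      ∑ x ∈ s ×ˢ s, c x.1 * conj (c x.2) * ∑ j ∈ t, g x.1 j * conj (g x.2 j) := by
    push_cast
    simp only [← Complex.mul_conj', map_sum, sum_mul_sum]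
    simp only [map_mul, sum_product, mul_sum]
    rw [sum_comm]
    refine sum_congr rfl fun i _ => ?_
    rw [sum_comm]
    exact sum_congr rfl fun i' _ => sum_congr rfl fun j _ => by ring
  calc _ = ‖((∑ j ∈ t, ‖∑ i ∈ s, c i * g i j‖ ^ 2 : ℝ) : ℂ)‖ := by
        rw [Complex.norm_real, Real.norm_of_nonneg (by positivity)]
    _ ≤ _ := by
        rw [hexpand]
        refine norm_sum_le_of_le _ fun x hx => ?_
        obtain ⟨hx₁, hx₂⟩ := mem_product.mp hx
        rw [norm_mul, norm_mul, RCLike.norm_conj]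
        exact mul_le_of_le_one_left (norm_nonneg _)
          (mul_le_one₀ (hc _ hx₁) (norm_nonneg _) (hc _ hx₂))

theorem mul_sum_Icc_le_sum_shift (N U V : ℕ) {F : ℤ → ℝ} (hF : ∀ n, 0 ≤ F n) :
    U * V * ∑ n ∈ Icc 1 N, F n ≤
      ∑ u ∈ Icc 1 U, ∑ v : Fin V, ∑ n ∈ Icc (1 - U * V : ℤ) N, F (n + u * (v + 1)) := by
  have hshift : ∀ u ∈ Icc 1 U, ∀ v : Fin V,
      ∑ n ∈ Icc 1 N, F n ≤ ∑ n ∈ Icc (1 - U * V : ℤ) N, F (n + u * (v + 1)) := by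
    intro u hu v
    have hv : u * (v + 1) ≤ U * V := Nat.mul_le_mul (mem_Icc.mp hu).2 v.2
    zify at hv
    have hv0 : 0 ≤ (u : ℤ) * (v + 1) := by positivity
    have hinj : Set.InjOn (fun n : ℕ => (n : ℤ) - u * (v + 1)) (Icc 1 N) :=
      fun _ _ _ _ h => Nat.cast_injective (sub_left_injective h)
    calc ∑ n ∈ Icc 1 N, F n
        = ∑ n ∈ (Icc 1 N).image fun n : ℕ => (n : ℤ) - u * (v + 1), F (n + u * (v + 1)) := by
          rw [sum_image hinj]
          simp only [sub_add_cancel]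
      _ ≤ _ := by
          refine sum_le_sum_of_subset_of_nonneg (image_subset_iff.mpr fun n hn => ?_)
            fun _ _ _ => hF _
          rw [mem_Icc] at hn ⊢
          omega
  calc U * V * ∑ n ∈ Icc 1 N, F n = ∑ u ∈ Icc 1 U, ∑ v : Fin V, ∑ n ∈ Icc 1 N, F n := by
        simp only [sum_const, card_univ, Fintype.card_fin, Nat.card_Icc, Nat.add_sub_cancel,
          nsmul_eq_mul, mul_assoc]
    _ ≤ _ := sum_le_sum fun u hu => sum_le_sum fun v _ => hshift u hu v

variable {p : ℕ} [Fact p.Prime] {χ : MulChar (ZMod p) ℂ} {a b : ℤ} {M U : ℕ} {α : ℕ → ℂ}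

theorem shiftCorrelation_le (χ : MulChar (ZMod p) ℂ) (V : ℕ) (t : ZMod p × ZMod p) :
    shiftCorrelation χ V t ≤ V := by
  have hterm : ∀ v ∈ (univ : Finset (Fin V)),
      ‖χ (t.1 + (v + 1 : ℕ)) * conj (χ (t.2 + (v + 1 : ℕ)))‖ ≤ 1 := by
    intro v _
    rw [norm_mul, RCLike.norm_conj]
    exact mul_le_one₀ (norm_mulChar_le_one χ _) (norm_nonneg _) (norm_mulChar_le_one χ _)
  simpa [shiftCorrelation] using norm_sum_le_of_le _ hterm

theorem sum_norm_sum_mulChar_shift_sq_le (hb : (b : ZMod p) ≠ 0) (hM : M < p) (hU : U < p)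
    (hα : ∀ m, ‖α m‖ ≤ 1) (k : ℕ) (n : ℤ) (V : ℕ) {u : ℕ} (hu : u ∈ Icc 1 U) :
    ∑ v : Fin V, ‖∑ m ∈ Icc 1 M,
        α m * χ ((a * k + b * m * (n + u * (v + 1)) : ℤ) : ZMod p)‖ ^ 2 ≤
      M * V + ∑ m ∈ (Icc 1 M).offDiag,
        shiftCorrelation χ V (samplePoint p b (shiftFractionPair a b ((k, u, n), m))) := by
  obtain ⟨hu0, huU⟩ := mem_Icc.mp hu
  have hfactor : ∀ (v : Fin V), ∀ m ∈ Icc 1 M,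
      α m * χ ((a * k + b * m * (n + u * (v + 1)) : ℤ) : ZMod p) =
        α m * χ (b * m * u) * χ ((shiftFraction a b (k, u, n) m : ZMod p) / b + (v + 1 : ℕ)) := by
    intro v m hm
    obtain ⟨hm0, hmM⟩ := mem_Icc.mp hm
    have h := mul_shiftFraction_div (a := a) (w := (k, u, n)) hb (Nat.ne_of_gt hm0)
      (hmM.trans_lt hM) (Nat.ne_of_gt hu0) (huU.trans_lt hU)
    rw [mul_assoc (α m), ← map_mul]
    congr 2
    push_cast at h ⊢
    linear_combination -h
  have hc : ∀ m ∈ Icc 1 M, ‖α m * χ (b * m * u)‖ ≤ 1 := by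
    intro m _
    rw [norm_mul]
    exact mul_le_one₀ (hα m) (norm_nonneg _) (norm_mulChar_le_one χ _)
  calc _ = ∑ v : Fin V, ‖∑ m ∈ Icc 1 M, α m * χ (b * m * u) *
          χ ((shiftFraction a b (k, u, n) m : ZMod p) / b + (v + 1 : ℕ))‖ ^ 2 :=
        sum_congr rfl fun v _ => by rw [sum_congr rfl (hfactor v)]
    _ ≤ ∑ m ∈ Icc 1 M ×ˢ Icc 1 M,
          shiftCorrelation χ V (samplePoint p b (shiftFractionPair a b ((k, u, n), m))) :=
        sum_norm_sum_mul_sq_le _ _ hc _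
    _ ≤ M * V + _ := by
        rw [← diag_union_offDiag, sum_union (disjoint_diag_offDiag _)]
        gcongr
        refine (sum_le_card_nsmul _ _ _ fun m _ => shiftCorrelation_le χ V _).trans_eq ?_
        rw [diag_card, Nat.card_Icc, Nat.add_sub_cancel, nsmul_eq_mul]

theorem mul_sum_norm_sum_mulChar_sq_le (hb : (b : ZMod p) ≠ 0) (hM : M < p) (hU : U < p)
    (hα : ∀ m, ‖α m‖ ≤ 1) (K N V : ℕ) :
    U * V * ∑ k ∈ Icc 1 K, ∑ n ∈ Icc 1 N,
        ‖∑ m ∈ Icc 1 M, α m * χ ((a * k + b * m * n : ℤ) : ZMod p)‖ ^ 2 ≤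
      U * V * (K * M * #(Icc (1 - U * V : ℤ) N)) + ∑ s ∈ shiftParams K M U (Icc (1 - U * V : ℤ) N),
        shiftCorrelation χ V (samplePoint p b (shiftFractionPair a b s)) := by
  set I := Icc (1 - U * V : ℤ) N
  set F : ℕ → ℤ → ℝ := fun k n =>
    ‖∑ m ∈ Icc 1 M, α m * χ ((a * k + b * m * n : ℤ) : ZMod p)‖ ^ 2
  set Z : ShiftParam → ℝ := fun s =>
    shiftCorrelation χ V (samplePoint p b (shiftFractionPair a b s))
  calc U * V * ∑ k ∈ Icc 1 K, ∑ n ∈ Icc 1 N, F k n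
      ≤ ∑ k ∈ Icc 1 K, ∑ u ∈ Icc 1 U, ∑ v : Fin V, ∑ n ∈ I, F k (n + u * (v + 1)) := by
        rw [mul_sum]
        exact sum_le_sum fun k _ => mul_sum_Icc_le_sum_shift N U V fun n => by positivity
    _ ≤ ∑ k ∈ Icc 1 K, ∑ u ∈ Icc 1 U, ∑ n ∈ I,
          (M * V + ∑ m ∈ (Icc 1 M).offDiag, Z ((k, u, n), m)) := by
        refine sum_le_sum fun k _ => sum_le_sum fun u hu => ?_
        rw [sum_comm]
        exact sum_le_sum fun n _ => sum_norm_sum_mulChar_shift_sq_le hb hM hU hα k n V hu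
    _ = U * V * (K * M * #I) + ∑ s ∈ shiftParams K M U I, Z s := by
        simp only [sum_add_distrib, shiftParams, sum_product, sum_const, Nat.card_Icc,
          Nat.add_sub_cancel, nsmul_eq_mul]
        ring

theorem norm_sum_mul_mul_le {ι κ : Type*} (s : Finset ι) (t : Finset κ) (β : ι → κ → ℂ)
    (T : ι → κ → ℂ) :
    ‖∑ i ∈ s, ∑ j ∈ t, β i j * T i j‖ ≤
      √(∑ i ∈ s, ∑ j ∈ t, ‖β i j‖ ^ 2) * √(∑ i ∈ s, ∑ j ∈ t, ‖T i j‖ ^ 2) := by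
  simp only [← sum_product']
  refine (norm_sum_le _ _).trans ?_
  simp only [norm_mul]
  exact Real.sum_mul_le_sqrt_mul_sqrt _ _ _

end Amplification

section ParameterChoice

theorem exists_divisors_bound_pow_five {ε : ℝ} (hε : 0 < ε) {r : ℕ} (hr : r ≠ 0) :
    ∃ C : ℝ, 0 ≤ C ∧ ∀ x : ℕ, ∃ D : ℕ, (∀ n ≠ 0, n ≤ x ^ 5 → #n.divisors ≤ D) ∧
      (D : ℝ) ^ 5 ≤ C * ((x : ℝ) ^ ε) ^ (4 * r) := by
  have hδ : 0 < 4 * r * ε / 25 := by positivity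
  obtain ⟨C, hC, hdiv⟩ := exists_card_divisors_le_mul_rpow hδ
  refine ⟨C ^ 5, by positivity, fun x => ⟨⌊C * ((x : ℝ) ^ 5) ^ (4 * r * ε / 25)⌋₊, ?_, ?_⟩⟩
  · intro n hn hnx
    refine Nat.le_floor ((hdiv n hn).trans ?_)
    gcongr
    exact_mod_cast hnx
  · calc _ ≤ (C * ((x : ℝ) ^ 5) ^ (4 * r * ε / 25)) ^ 5 :=
          pow_le_pow_left₀ (Nat.cast_nonneg _) (Nat.floor_le (by positivity)) 5
      _ = C ^ 5 * ((x : ℝ) ^ ε) ^ (4 * r) := by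
          rw [mul_pow, ← Real.rpow_natCast_mul x.cast_nonneg, ← Real.rpow_mul_natCast x.cast_nonneg,
            ← Real.rpow_mul_natCast x.cast_nonneg]
          congr 2
          push_cast
          ring

theorem exists_nat_mul_le_floor {P N : ℝ} (hP : 1 ≤ P) (hN : 4 * P < N) :
    ∃ U V : ℕ, U ≠ 0 ∧ V ≠ 0 ∧ U * V ≤ ⌊N⌋₊ ∧ V ≤ P ∧ P ≤ 2 * V ∧ N ≤ 2 * (U * P) ∧
      U * P ≤ 2 * N := by
  have hV : 1 ≤ ⌊P⌋₊ := Nat.le_floor (by exact_mod_cast hP)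
  have hV1 : (1 : ℝ) ≤ ⌊P⌋₊ := mod_cast hV
  have hVP : (⌊P⌋₊ : ℝ) ≤ P := Nat.floor_le (by linarith)
  have hPV : P ≤ 2 * ⌊P⌋₊ := by linarith [Nat.lt_floor_add_one P]
  have hVN : ⌊P⌋₊ ≤ ⌊N⌋₊ := Nat.floor_le_floor (by linarith)
  have hUV : ⌊N⌋₊ / ⌊P⌋₊ * ⌊P⌋₊ ≤ ⌊N⌋₊ := Nat.div_mul_le_self _ _
  have hUV' : (⌊N⌋₊ / ⌊P⌋₊ : ℕ) * (⌊P⌋₊ : ℝ) ≤ N :=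
    le_trans (mod_cast hUV) (Nat.floor_le (by linarith))
  have hN' : (⌊N⌋₊ : ℝ) < (⌊N⌋₊ / ⌊P⌋₊ : ℕ) * ⌊P⌋₊ + ⌊P⌋₊ := mod_cast Nat.lt_div_mul_add hV
  refine ⟨⌊N⌋₊ / ⌊P⌋₊, ⌊P⌋₊, (Nat.div_pos hVN hV).ne', Nat.ne_of_gt hV, hUV, hVP, hPV, ?_, ?_⟩
  · have : (⌊N⌋₊ / ⌊P⌋₊ : ℕ) * (⌊P⌋₊ : ℝ) ≤ (⌊N⌋₊ / ⌊P⌋₊ : ℕ) * P := by gcongr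
    linarith [Nat.lt_floor_add_one N]
  · calc (⌊N⌋₊ / ⌊P⌋₊ : ℕ) * P ≤ (⌊N⌋₊ / ⌊P⌋₊ : ℕ) * (2 * ⌊P⌋₊) := by gcongr
      _ ≤ 2 * N := by linarith

theorem card_Icc_one_sub_le {N : ℝ} (hN : 0 ≤ N) {W : ℕ} (hW : W ≤ ⌊N⌋₊) :
    (#(Icc (1 - W : ℤ) ⌊N⌋₊) : ℝ) ≤ 2 * N := by
  have hcard : #(Icc (1 - W : ℤ) ⌊N⌋₊) ≤ 2 * ⌊N⌋₊ := by
    rw [Int.card_Icc]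
    omega
  calc (#(Icc (1 - W : ℤ) ⌊N⌋₊) : ℝ) ≤ 2 * ⌊N⌋₊ := mod_cast hcard
    _ ≤ 2 * N := by
        gcongr
        exact Nat.floor_le hN

theorem abs_mul_add_mul_mul_le (a b : ℤ) {K M N : ℝ} (hK : 0 ≤ K) (hM : 0 ≤ M) (hN : 0 ≤ N)
    {W : ℕ} (hW : W ≤ ⌊N⌋₊) {k m : ℕ} {n : ℤ} (hk : k ∈ Icc 1 ⌊K⌋₊) (hm : m ∈ Icc 1 ⌊M⌋₊)
    (hn : n ∈ Icc (1 - W : ℤ) ⌊N⌋₊) :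
    |(a * k + b * m * n : ℝ)| ≤ |(a : ℝ)| * K + |(b : ℝ)| * M * N := by
  have hkK : (k : ℝ) ≤ K := (Nat.le_floor_iff hK).mp (mem_Icc.mp hk).2
  have hmM : (m : ℝ) ≤ M := (Nat.le_floor_iff hM).mp (mem_Icc.mp hm).2
  have hnN : |(n : ℝ)| ≤ N := by
    have : |n| ≤ ⌊N⌋₊ := by
      rw [mem_Icc] at hn
      rw [abs_le]
      omega
    exact le_trans (mod_cast this) (Nat.floor_le hN)
  refine (abs_add_le _ _).trans ?_
  rw [abs_mul, abs_mul, abs_mul, Nat.abs_cast, Nat.abs_cast]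
  gcongr

theorem div_pow_two_mul_le {r : ℕ} (hr : r ≠ 0) {T G Z N p P U V L S D A : ℝ} (hZ : 0 < Z)
    (hN : 0 < N) (hp : 0 ≤ p) (hP : 0 ≤ P) (hU : 0 < U) (hV : 0 < V) (hG0 : 0 ≤ G) (hS0 : 0 ≤ S)
    (hD : 0 ≤ D) (hA : 0 ≤ A) (hPr : P ^ r = p) (hPV : P ≤ 2 * V) (hNU : N ≤ 2 * (U * P))
    (hG : G ≤ 2 * Z * U) (hS : S ≤ 8 * (1 + L))
    (hT : T ^ (2 * r) ≤ G ^ (2 * r - 1) * S ^ 2 * D * (A * p ^ 3)) :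
    (T / (U * V)) ^ (2 * r) ≤
      2 ^ (4 * r + 6) * A * D * (1 + L) ^ 2 * Z ^ (2 * r) * (p * P / (Z * N)) := by
  have hp3 : p ^ 3 ≤ p * (2 * V) ^ (2 * r) := by
    calc p ^ 3 = p * P ^ (2 * r) := by
          rw [mul_comm 2 r, pow_mul, hPr]
          ring
      _ ≤ _ := by gcongr
  have hG' : G ^ (2 * r - 1) ≤ (2 * Z * U) ^ (2 * r) * (P / (Z * N)) := by
    calc G ^ (2 * r - 1) ≤ (2 * Z * U) ^ (2 * r - 1) := by gcongr
      _ ≤ (2 * Z * U) ^ (2 * r - 1) * ((2 * Z * U) * (P / (Z * N))) := by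
          refine le_mul_of_one_le_right (by positivity) ?_
          rw [mul_div_assoc', le_div_iff₀ (by positivity)]
          linear_combination Z * hNU
      _ = (2 * Z * U) ^ (2 * r) * (P / (Z * N)) := by
          rw [← mul_assoc, ← pow_succ, show 2 * r - 1 + 1 = 2 * r by omega]
  rw [div_pow, div_le_iff₀ (by positivity)]
  calc T ^ (2 * r) ≤ G ^ (2 * r - 1) * S ^ 2 * D * (A * p ^ 3) := hT
    _ ≤ (2 * Z * U) ^ (2 * r) * (P / (Z * N)) * (8 * (1 + L)) ^ 2 * D *
          (A * (p * (2 * V) ^ (2 * r))) := by gcongr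
    _ = _ := by
        rw [pow_add, show 4 * r = 2 * r + 2 * r by ring, pow_add]
        simp only [mul_pow]
        ring

variable {p : ℕ} [Fact p.Prime] {χ : MulChar (ZMod p) ℂ} {r : ℕ} {a b : ℤ} {K M N P : ℝ}
  {α : ℕ → ℂ} {D U V : ℕ}

theorem sum_shiftCorrelation_div_pow_le (hχ : χ ≠ 1) (hr : r ≠ 0) (ha : a ≠ 0)
    (hb : (b : ZMod p) ≠ 0) (hK : 0 < K) (hKp : K < p) (hM : 0 < M) (hMp : M < p) (hN : 0 < N)
    (hNp : N < p) (hP : 0 < P) (hPr : P ^ r = p)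
    (hD : ∀ n ≠ 0, n ≤ p ^ 5 → #n.divisors ≤ D) (hU : U ≠ 0) (hV : V ≠ 0)
    (hUV : U * V ≤ ⌊N⌋₊) (hVP : V ≤ P) (hPV : P ≤ 2 * V) (hNU : N ≤ 2 * (U * P))
    (hUN : U * P ≤ 2 * N) :
    ((∑ s ∈ shiftParams ⌊K⌋₊ ⌊M⌋₊ U (Icc (1 - U * V : ℤ) ⌊N⌋₊),
      shiftCorrelation χ V (samplePoint p b (shiftFractionPair a b s))) / (U * V)) ^ (2 * r) ≤
      2 ^ (4 * r + 6) * ((r : ℝ) ^ (2 * r) + 4 * r ^ 2) * D ^ 5 *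
        (1 + (|(a : ℝ)| * K + |(b : ℝ)| * M * N) * M * N / (p * P)) ^ 2 *
        (K * M ^ 2 * N) ^ (2 * r) * (p * P / (K * M ^ 2 * N * N)) := by
  have hp : (0 : ℝ) < p := hK.trans hKp
  have hK0 : (⌊K⌋₊ : ℝ) ≤ K := Nat.floor_le hK.le
  have hM0 : (⌊M⌋₊ : ℝ) ≤ M := Nat.floor_le hM.le
  have hKp' : ⌊K⌋₊ < p := (Nat.floor_lt hK.le).mpr hKp
  have hMp' : ⌊M⌋₊ < p := (Nat.floor_lt hM.le).mpr hMp
  have hUp : U < p := by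
    calc U ≤ U * V := Nat.le_mul_of_pos_right U (Nat.pos_of_ne_zero hV)
      _ ≤ ⌊N⌋₊ := hUV
      _ < p := (Nat.floor_lt hN.le).mpr hNp
  have hVr : V ^ r ≤ p := by
    have : (V : ℝ) ^ r ≤ p := by
      rw [← hPr]
      gcongr
    exact_mod_cast this
  have hB : ⌊K⌋₊ * U * ⌊M⌋₊ ^ 3 ≤ p ^ 5 := by
    calc ⌊K⌋₊ * U * ⌊M⌋₊ ^ 3 ≤ p * p * p ^ 3 := by gcongr
      _ = p ^ 5 := by ring
  set X := |(a : ℝ)| * K + |(b : ℝ)| * M * N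
  have hX : 0 < X := by
    have : 0 < |(a : ℝ)| := abs_pos.mpr (mod_cast ha)
    positivity
  have hI := card_Icc_one_sub_le hN.le hUV
  have hnum := fun k hk m hm n hn =>
    abs_mul_add_mul_mul_le (k := k) (m := m) (n := n) a b hK.le hM.le hN.le hUV hk hm hn
  rw [Nat.cast_mul] at hI hnum
  have hXU : X * (M * U) / p ≤ 2 * (X * M * N / (p * P)) := by
    rw [div_le_iff₀ hp]
    calc X * (M * U) = X * M * (U * P) / P := by field_simp
      _ ≤ X * M * (2 * N) / P := by gcongr
      _ = _ := by field_simp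
  refine div_pow_two_mul_le hr (S := 2 + 4 * X * (M * U) / p) (by positivity) hN hp.le hP.le
    (by positivity) (by positivity) (by positivity) (by positivity) (by positivity) (by positivity)
    hPr hPV hNU ?_ ?_ (sum_shiftCorrelation_samplePoint_pow_le hχ hr ha hb hMp' hUp hVr hB hD hX
      (by positivity) (by gcongr) hnum)
  · calc (⌊K⌋₊ * U * #(Icc (1 - U * V : ℤ) ⌊N⌋₊) * ⌊M⌋₊ ^ 2 : ℝ) ≤ K * U * (2 * N) * M ^ 2 := by
          gcongr
      _ = _ := by ring
  · rw [mul_assoc 4 X, mul_div_assoc]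
    linarith

end ParameterChoice

section TypeIIBound

theorem sqrt_le_of_pow_two_mul_le {r : ℕ} (hr : r ≠ 0) {τ C E Y Z Q : ℝ} (hτ : 0 ≤ τ) (hC : 0 ≤ C)
    (hE : 0 ≤ E) (hY : 0 ≤ Y) (hZ : 0 ≤ Z) (hQ : 0 ≤ Q)
    (h : τ ^ (2 * r) ≤ C * E ^ (4 * r) * Y ^ 2 * Z ^ (2 * r) * Q) :
    √τ ≤ C ^ ((1 : ℝ) / (4 * r)) * E * √Z *
      (Y ^ ((1 : ℝ) / (2 * r)) * Q ^ ((1 : ℝ) / (4 * r))) := by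
  have h4 {x : ℝ} (hx : 0 ≤ x) : (x ^ ((1 : ℝ) / (4 * r))) ^ (4 * r) = x := by
    have := Real.rpow_inv_natCast_pow hx (n := 4 * r) (by omega)
    rwa [Nat.cast_mul, Nat.cast_ofNat, ← one_div] at this
  have h2 {x : ℝ} (hx : 0 ≤ x) : (x ^ ((1 : ℝ) / (2 * r))) ^ (4 * r) = x ^ 2 := by
    have := Real.rpow_inv_natCast_pow hx (n := 2 * r) (by omega)
    rw [Nat.cast_mul, Nat.cast_ofNat, ← one_div] at this
    rw [show 4 * r = 2 * r * 2 by ring, pow_mul, this]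
  have hsqrt {x : ℝ} (hx : 0 ≤ x) : √x ^ (4 * r) = x ^ (2 * r) := by
    rw [show 4 * r = 2 * (2 * r) by ring, pow_mul, Real.sq_sqrt hx]
  refine le_of_pow_le_pow_left₀ (n := 4 * r) (by omega) (by positivity) ?_
  rw [hsqrt hτ]
  simp only [mul_pow, h4 hC, h2 hY, h4 hQ, hsqrt hZ]
  linarith

theorem sqrt_two_mul_le {K M N : ℝ} (hK : 0 ≤ K) (hM : 0 < M) (hN : 0 ≤ N) :
    √(2 * (K * M * N)) ≤ 2 * (√(K * M ^ 2 * N) * M ^ (-(1 : ℝ) / 2)) := by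
  have hpow : M ^ (-(1 : ℝ) / 2) = (√M)⁻¹ := by
    rw [neg_div, Real.rpow_neg hM.le, Real.sqrt_eq_rpow]
  rw [hpow, ← Real.sqrt_inv, ← Real.sqrt_mul (by positivity), Real.sqrt_le_left (by positivity),
    mul_pow, Real.sq_sqrt (by positivity)]
  have h : K * M ^ 2 * N * M⁻¹ = K * M * N := by field_simp
  rw [h]
  gcongr
  norm_num

theorem sqrt_le_of_le_add {r : ℕ} (hr : r ≠ 0) {S τ C E K M N Y Q : ℝ} (hτ : 0 ≤ τ) (hC : 0 ≤ C)
    (hE : 1 ≤ E) (hY : 0 ≤ Y) (hK : 0 ≤ K) (hM : 0 < M) (hN : 0 ≤ N) (hQ : 0 ≤ Q)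
    (hS : S ≤ 2 * (K * M * N) + τ)
    (h : τ ^ (2 * r) ≤ C * E ^ (4 * r) * Y ^ 2 * (K * M ^ 2 * N) ^ (2 * r) * Q) :
    √S ≤ (C ^ ((1 : ℝ) / (4 * r)) + 2) * E * √(K * M ^ 2 * N) *
      (Y ^ ((1 : ℝ) / (2 * r)) * Q ^ ((1 : ℝ) / (4 * r)) + M ^ (-(1 : ℝ) / 2)) := by
  have hroot := sqrt_le_of_pow_two_mul_le hr hτ hC (by positivity) hY (by positivity) hQ h
  have hdiag := sqrt_two_mul_le hK hM hN
  set c := C ^ ((1 : ℝ) / (4 * r))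
  set F := √(K * M ^ 2 * N)
  set G := Y ^ ((1 : ℝ) / (2 * r)) * Q ^ ((1 : ℝ) / (4 * r))
  set H := M ^ (-(1 : ℝ) / 2)
  have : 0 ≤ c := by positivity
  have : 0 ≤ G := by positivity
  have : 0 ≤ H := by positivity
  calc √S ≤ √(2 * (K * M * N) + τ) := Real.sqrt_le_sqrt hS
    _ ≤ √(2 * (K * M * N)) + √τ := by
        simp only [Real.sqrt_eq_rpow]
        exact Real.rpow_add_le_add_rpow (by positivity) hτ (by norm_num) (by norm_num)
    _ ≤ 2 * (F * H) + c * E * F * G := add_le_add hdiag hroot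
    _ ≤ 2 * E * F * H + c * E * F * G + (2 * E * F * G + c * E * F * H) := by
        have : 2 * (F * H) ≤ 2 * E * F * H := by
          rw [mul_assoc 2 E, mul_assoc 2, mul_assoc E]
          exact mul_le_mul_of_nonneg_left (le_mul_of_one_le_left (by positivity) hE) zero_le_two
        have : 0 ≤ 2 * E * F * G + c * E * F * H := by positivity
        linarith
    _ = _ := by ring

variable {p : ℕ} [Fact p.Prime] {χ : MulChar (ZMod p) ℂ} {r : ℕ} {a b : ℤ} {K M N P : ℝ}
  {α : ℕ → ℂ} {D : ℕ}

theorem exists_secondMoment_le (hχ : χ ≠ 1) (hr : r ≠ 0) (ha : a ≠ 0) (hb : (b : ZMod p) ≠ 0)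
    (hK : 0 < K) (hKp : K < p) (hM : 0 < M) (hMp : M < p) (hNp : N < p) (hP : 1 ≤ P)
    (hPr : P ^ r = p) (hPN : 4 * P < N) (hα : ∀ m, ‖α m‖ ≤ 1)
    (hD : ∀ n ≠ 0, n ≤ p ^ 5 → #n.divisors ≤ D) :
    ∃ τ : ℝ, 0 ≤ τ ∧
      ∑ k ∈ Icc 1 ⌊K⌋₊, ∑ n ∈ Icc 1 ⌊N⌋₊,
        ‖∑ m ∈ Icc 1 ⌊M⌋₊, α m * χ ((a * k + b * m * n : ℤ) : ZMod p)‖ ^ 2 ≤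
          2 * (K * M * N) + τ ∧
      τ ^ (2 * r) ≤ 2 ^ (4 * r + 6) * ((r : ℝ) ^ (2 * r) + 4 * r ^ 2) * D ^ 5 *
        (1 + (|(a : ℝ)| * K + |(b : ℝ)| * M * N) * M * N / (p * P)) ^ 2 *
        (K * M ^ 2 * N) ^ (2 * r) * (p * P / (K * M ^ 2 * N * N)) := by
  obtain ⟨U, V, hU, hV, hUV, hVP, hPV, hNU, hUN⟩ := exists_nat_mul_le_floor hP hPN
  have hN : 0 < N := by linarith
  have hMp' : ⌊M⌋₊ < p := (Nat.floor_lt hM.le).mpr hMp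
  have hUp : U < p := by
    calc U ≤ U * V := Nat.le_mul_of_pos_right U (Nat.pos_of_ne_zero hV)
      _ ≤ ⌊N⌋₊ := hUV
      _ < p := (Nat.floor_lt hN.le).mpr hNp
  have hI := card_Icc_one_sub_le hN.le hUV
  rw [Nat.cast_mul] at hI
  have hsecond := mul_sum_norm_sum_mulChar_sq_le (χ := χ) (a := a) hb hMp' hUp hα ⌊K⌋₊ ⌊N⌋₊ V
  have hdiag : (⌊K⌋₊ * ⌊M⌋₊ * #(Icc (1 - U * V : ℤ) ⌊N⌋₊) : ℝ) ≤ 2 * (K * M * N) := by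
    calc (⌊K⌋₊ * ⌊M⌋₊ * #(Icc (1 - U * V : ℤ) ⌊N⌋₊) : ℝ) ≤ K * M * (2 * N) := by
          gcongr
          exacts [Nat.floor_le hK.le, Nat.floor_le hM.le]
      _ = _ := by ring
  have hUV0 : (0 : ℝ) < U * V := by positivity
  refine ⟨_, ?_, ?_, sum_shiftCorrelation_div_pow_le hχ hr ha hb hK hKp hM hMp hN hNp (by linarith)
    hPr hD hU hV hUV hVP hPV hNU hUN⟩
  · exact div_nonneg (sum_nonneg fun _ _ => norm_nonneg _) hUV0.le
  · refine le_trans ?_ (add_le_add_left hdiag _)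
    rw [← sub_le_iff_le_add', le_div_iff₀ hUV0]
    linarith

theorem sqrt_secondMoment_le (hχ : χ ≠ 1) (hr : r ≠ 0) (ha : a ≠ 0) (hb : (b : ZMod p) ≠ 0)
    (hK : 0 < K) (hKp : K < p) (hM : 0 < M) (hMp : M < p) (hNp : N < p) (hP : 1 ≤ P)
    (hPr : P ^ r = p) (hPN : 4 * P < N) (hα : ∀ m, ‖α m‖ ≤ 1)
    (hD : ∀ n ≠ 0, n ≤ p ^ 5 → #n.divisors ≤ D) {C E : ℝ} (hC : 0 ≤ C) (hE : 1 ≤ E)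
    (hDpow : (D : ℝ) ^ 5 ≤ C * E ^ (4 * r)) :
    √(∑ k ∈ Icc 1 ⌊K⌋₊, ∑ n ∈ Icc 1 ⌊N⌋₊,
        ‖∑ m ∈ Icc 1 ⌊M⌋₊, α m * χ ((a * k + b * m * n : ℤ) : ZMod p)‖ ^ 2) ≤
      ((2 ^ (4 * r + 6) * ((r : ℝ) ^ (2 * r) + 4 * r ^ 2) * C) ^ ((1 : ℝ) / (4 * r)) + 2) * E *
        √(K * M ^ 2 * N) *
        ((1 + (|(a : ℝ)| * K + |(b : ℝ)| * M * N) * M * N / (p * P)) ^ ((1 : ℝ) / (2 * r)) *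
          (p * P / (K * M ^ 2 * N * N)) ^ ((1 : ℝ) / (4 * r)) + M ^ (-(1 : ℝ) / 2)) := by
  obtain ⟨τ, hτ, hS, hτr⟩ :=
    exists_secondMoment_le hχ hr ha hb hK hKp hM hMp hNp hP hPr hPN hα hD
  have hN : 0 < N := by linarith
  refine sqrt_le_of_le_add hr hτ (by positivity) hE (by positivity) hK.le hM hN.le (by positivity)
    hS (hτr.trans ?_)
  rw [mul_assoc (_ * _) C]
  gcongr

theorem norm_sum_mul_mul_mul_le (s t u : Finset ℕ) (α : ℕ → ℂ) (β : ℕ → ℕ → ℂ)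
    (f : ℕ → ℕ → ℕ → ℂ) :
    ‖∑ k ∈ s, ∑ m ∈ t, ∑ n ∈ u, α m * β k n * f k m n‖ ≤
      (∑ k ∈ s, ∑ n ∈ u, ‖β k n‖ ^ 2) ^ ((1 : ℝ) / 2) *
        √(∑ k ∈ s, ∑ n ∈ u, ‖∑ m ∈ t, α m * f k m n‖ ^ 2) := by
  rw [← Real.sqrt_eq_rpow]
  refine le_of_eq_of_le (congrArg _ (sum_congr rfl fun k _ => ?_)) (norm_sum_mul_mul_le s u β _)
  rw [sum_comm]
  exact sum_congr rfl fun n _ => by simp only [mul_sum, mul_left_comm, mul_assoc]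

end TypeIIBound

theorem trilinear_typeII_general {r : ℕ} (hr : r ≠ 0) {ε : ℝ} (hε : 0 < ε) :
    ∃ C : ℝ, 0 < C ∧ ∀ p : ℕ, p.Prime → ∀ K M N : ℝ, 0 < K → K < p → 0 < M → M < p → N < p →
      4 * (p : ℝ) ^ ((1 : ℝ) / r) < N → ∀ a b : ℤ, a ≠ 0 → ¬ (p : ℤ) ∣ b →
      ∀ χ : MulChar (ZMod p) ℂ, χ ≠ 1 → ∀ α : ℕ → ℂ, (∀ m, ‖α m‖ ≤ 1) → ∀ β : ℕ → ℕ → ℂ,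
      ‖∑ k ∈ Icc 1 ⌊K⌋₊, ∑ m ∈ Icc 1 ⌊M⌋₊, ∑ n ∈ Icc 1 ⌊N⌋₊,
          α m * β k n * χ ((a * k + b * m * n : ℤ) : ZMod p)‖ ≤
        C * (p : ℝ) ^ ε *
          (∑ k ∈ Icc 1 ⌊K⌋₊, ∑ n ∈ Icc 1 ⌊N⌋₊, ‖β k n‖ ^ 2) ^ ((1 : ℝ) / 2) *
          (M * (N * K) ^ ((1 : ℝ) / 2)) *
          ((1 + (|(a : ℝ)| * K + |(b : ℝ)| * M * N) * M * N *
              (p : ℝ) ^ (-1 - 1 / (r : ℝ))) ^ ((1 : ℝ) / (2 * r)) *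
            ((p : ℝ) ^ (1 + 1 / (r : ℝ)) / (K * M ^ 2 * N ^ 2)) ^ ((1 : ℝ) / (4 * r)) +
            M ^ (-(1 : ℝ) / 2)) := by
  obtain ⟨C, hC, hdiv⟩ := exists_divisors_bound_pow_five hε hr
  refine ⟨(2 ^ (4 * r + 6) * ((r : ℝ) ^ (2 * r) + 4 * r ^ 2) * C) ^ ((1 : ℝ) / (4 * r)) + 2,
    by positivity, ?_⟩
  intro p hp K M N hK hKp hM hMp hNp hPN a b ha hb χ hχ α hα β
  have : Fact p.Prime := ⟨hp⟩
  have hb' : (b : ZMod p) ≠ 0 := by rwa [Ne, ZMod.intCast_zmod_eq_zero_iff_dvd]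
  have hp1 : (1 : ℝ) ≤ p := mod_cast hp.one_le
  obtain ⟨D, hD, hDpow⟩ := hdiv p
  have hP : 1 ≤ (p : ℝ) ^ ((1 : ℝ) / r) := Real.one_le_rpow hp1 (by positivity)
  have hPr : ((p : ℝ) ^ ((1 : ℝ) / r)) ^ r = p := by
    rw [one_div, Real.rpow_inv_natCast_pow p.cast_nonneg hr]
  have hpP : (p : ℝ) ^ (1 + 1 / (r : ℝ)) = p * (p : ℝ) ^ ((1 : ℝ) / r) := by
    rw [Real.rpow_add (by positivity), Real.rpow_one]
  have hpP' : (p : ℝ) ^ (-1 - 1 / (r : ℝ)) = (p * (p : ℝ) ^ ((1 : ℝ) / r))⁻¹ := by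
    rw [← hpP, ← Real.rpow_neg p.cast_nonneg, neg_add']
  have hfactor : M * (N * K) ^ ((1 : ℝ) / 2) = √(K * M ^ 2 * N) := by
    rw [← Real.sqrt_eq_rpow, show K * M ^ 2 * N = M ^ 2 * (N * K) by ring,
      Real.sqrt_mul (sq_nonneg M), Real.sqrt_sq hM.le]
  rw [hpP, hpP', ← div_eq_mul_inv, hfactor, sq N, ← mul_assoc (K * M ^ 2)]
  refine (norm_sum_mul_mul_mul_le _ _ _ _ _ _).trans ((mul_le_mul_of_nonneg_left
    (sqrt_secondMoment_le hχ hr ha hb' hK hKp hM hMp hNp hP hPr hPN hα hD hC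
      (Real.one_le_rpow hp1 hε.le) hDpow) (by positivity)).trans_eq ?_)
  ring

/-- Theorem 2.5 (Type II trilinear character sum bound). -/
theorem trilinear_typeII (r : ℕ) (hr : 2 ≤ r) (ε : ℝ) (hε : 0 < ε) :
    ∃ C : ℝ, 0 < C ∧ ∀ (p : ℕ), p.Prime →
      ∀ (K M N : ℝ), 1 < K → (K : ℝ) < p → 1 < M → (M : ℝ) < p → 1 < N → (N : ℝ) < p →
      N > 4 * (p : ℝ) ^ ((1 : ℝ) / (r : ℝ)) →
      ∀ (a b : ℤ), ¬ ((p : ℤ) ∣ a * b) →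
      ∀ (χ : MulChar (ZMod p) ℂ), χ ≠ 1 →
      ∀ (α : ℕ → ℂ), (∀ m, ‖α m‖ ≤ 1) →
      ∀ (β : ℕ → ℕ → ℂ),
      ‖∑ k ∈ Icc 1 ⌊K⌋₊, ∑ m ∈ Icc 1 ⌊M⌋₊, ∑ n ∈ Icc 1 ⌊N⌋₊,
          α m * β k n * χ ((a * k + b * m * n : ℤ) : ZMod p)‖ ≤
        C * (p : ℝ) ^ ε *
          (∑ k ∈ Icc 1 ⌊K⌋₊, ∑ n ∈ Icc 1 ⌊N⌋₊, ‖β k n‖ ^ 2) ^ ((1 : ℝ) / 2) *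
          (M * (N * K) ^ ((1 : ℝ) / 2)) *
          ((1 + K / M ^ 2) ^ ((1 : ℝ) / (4 * (r : ℝ))) *
            (1 + ((|a| : ℝ) * K + (|b| : ℝ) * M * N) * M * N *
              (p : ℝ) ^ (-1 - 1 / (r : ℝ) : ℝ)) ^ ((1 : ℝ) / (2 * (r : ℝ))) *
            ((p : ℝ) ^ (1 + 1 / (r : ℝ) : ℝ) / (K * M ^ 2 * N ^ 2)) ^ ((1 : ℝ) / (4 * (r : ℝ))) +
            M ^ (-(1 : ℝ) / 2)) := by
  obtain ⟨C, hC, hbound⟩ := trilinear_typeII_general (r := r) (by omega) hε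
  refine ⟨C, hC, fun p hp K M N hK hKp hM hMp hN hNp hPN a b hab χ hχ α hα β => ?_⟩
  refine (hbound p hp K M N (by linarith) hKp (by linarith) hMp hNp hPN a b
    (fun ha => hab (by simp [ha])) (fun hb => hab (hb.mul_left a)) χ hχ α hα β).trans ?_
  gcongr
  rw [mul_assoc]
  refine le_mul_of_one_le_left (by positivity) (Real.one_le_rpow ?_ (by positivity))
  exact le_add_of_nonneg_right (by positivity)
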